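/- arXiv:1403.6539 — 4 statements merged into one kernel-verified Lean document; each statement's English description precedes it below -/
import Mathlib

section
/- The Gelfand-Kirillov dimension of the down-up algebra A(α,β,φ) over K[t₁,…,tₙ] equals n+3. -/
open MvPolynomial

namespace DownUp

inductive Gen | u | d

variable {K : Type} [Field K] {n : ℕ}

/-- Free algebra over the polynomial base ring on generators u, d. -/
abbrev F (K : Type) [Field K] (n : ℕ) := FreeAlgebra (MvPolynomial (Fin n) K) Gen

noncomputable def uF : F K n := FreeAlgebra.ι _ Gen.u
noncomputable def dF : F K n := FreeAlgebra.ι _ Gen.d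

/-- The defining relations of the down-up algebra over K[t₁,…,tₙ]. -/
inductive Rel (α β : K) (φ : MvPolynomial (Fin n) K) : F K n → F K n → Prop
  | ddu : Rel α β φ (dF * dF * uF)
      (α • (dF * uF * dF) + β • (uF * dF * dF) + algebraMap _ _ φ * dF)
  | duu : Rel α β φ (dF * uF * uF)
      (α • (uF * dF * uF) + β • (uF * uF * dF) + uF * algebraMap _ _ φ)

/-- The down-up algebra A(α,β,φ) over K[t₁,…,tₙ]. -/
abbrev A (α β : K) (φ : MvPolynomial (Fin n) K) := RingQuot (Rel α β φ)

noncomputable def U (α β : K) (φ : MvPolynomial (Fin n) K) : A α β φ :=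
  RingQuot.mkAlgHom K _ uF
noncomputable def D (α β : K) (φ : MvPolynomial (Fin n) K) : A α β φ :=
  RingQuot.mkAlgHom K _ dF

/-- Image of the base polynomial ring in A. -/
noncomputable def T (α β : K) (φ : MvPolynomial (Fin n) K) :
    MvPolynomial (Fin n) K →ₐ[K] A α β φ :=
  (RingQuot.mkAlgHom K (Rel α β φ)).comp (IsScalarTower.toAlgHom K (MvPolynomial (Fin n) K) (F K n))

end DownUp
open scoped ENNReal

/-- The Gelfand–Kirillov dimension of a K-algebra: the supremum over all
finite-dimensional subspaces `V` of `limsup_m log_m dim(∑_{i≤m} Vⁱ)`. -/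
noncomputable def gkDim (K A' : Type) [Field K] [Ring A'] [Algebra K A'] : ℝ≥0∞ :=
  ⨆ V : {V : Submodule K A' // FiniteDimensional K V},
    Filter.limsup
      (fun m : ℕ => ENNReal.ofReal
        (Real.logb m
          (Module.finrank K ((Finset.range (m + 1)).sum (fun i => V.1 ^ i) : Submodule K A'))))
      Filter.atTop

section Growth
open Filter

lemma gk_tendsto (C : ℝ) (hC : 0 < C) (N : ℕ) :
    Tendsto (fun m : ℕ => ENNReal.ofReal (Real.logb m (C * (m:ℝ)^N))) atTop (nhds (N : ℝ≥0∞)) := by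
  have h0 : (N : ℝ≥0∞) = ENNReal.ofReal (N : ℝ) := by simp
  rw [h0]
  apply (ENNReal.continuous_ofReal.tendsto _).comp
  have h1 : Tendsto (fun m : ℕ => Real.log C / Real.log (m:ℝ) + N) atTop (nhds (0 + N)) := by
    apply Tendsto.add_const
    apply Tendsto.const_div_atTop
    exact Real.tendsto_log_atTop.comp tendsto_natCast_atTop_atTop
  rw [zero_add] at h1
  refine h1.congr' ?_
  filter_upwards [eventually_ge_atTop 2] with m hm
  have hm' : (2:ℝ) ≤ m := by exact_mod_cast hm
  have hl : 0 < Real.log (m:ℝ) := Real.log_pos (by linarith)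
  rw [Real.logb, Real.log_mul hC.ne' (by positivity), Real.log_pow]
  field_simp

lemma gk_upper (f : ℕ → ℕ) (C : ℝ) (hC : 0 < C) (N : ℕ)
    (h : ∀ m : ℕ, 2 ≤ m → (f m : ℝ) ≤ C * (m:ℝ)^N) :
    limsup (fun m : ℕ => ENNReal.ofReal (Real.logb m (f m))) atTop ≤ N := by
  rw [← (gk_tendsto C hC N).limsup_eq]
  refine limsup_le_limsup ?_
  filter_upwards [eventually_ge_atTop 2] with m hm
  have hm' : (2:ℝ) ≤ m := by exact_mod_cast hm
  rcases Nat.eq_zero_or_pos (f m) with h0 | h0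
  · simp [h0]
  · apply ENNReal.ofReal_le_ofReal
    exact Real.logb_le_logb_of_le (by linarith) (by exact_mod_cast h0) (h m hm)

lemma gk_lower (f : ℕ → ℕ) (C : ℝ) (hC : 0 < C) (N : ℕ)
    (h : ∀ m : ℕ, 2 ≤ m → C * (m:ℝ)^N ≤ f m) :
    N ≤ limsup (fun m : ℕ => ENNReal.ofReal (Real.logb m (f m))) atTop := by
  rw [← (gk_tendsto C hC N).limsup_eq]
  refine limsup_le_limsup ?_
  filter_upwards [eventually_ge_atTop 2] with m hm
  have hm' : (2:ℝ) ≤ m := by exact_mod_cast hm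
  apply ENNReal.ofReal_le_ofReal
  exact Real.logb_le_logb_of_le (by linarith) (by positivity) (h m hm)

theorem gk_generic {K A' : Type} [Field K] [Ring A'] [Algebra K A'] (N : ℕ) (hN : 0 < N)
    (H : ℕ → Submodule K A') (H_mono : ∀ m m', m ≤ m' → H m ≤ H m') (H_one : (1 : A') ∈ H 0)
    (H_mul : ∀ r m x y, x ∈ H r → y ∈ H m → x * y ∈ H (r + m))
    (H_exhaust : ∀ x, ∃ r, x ∈ H r) {ι : ℕ → Type} [∀ s, Fintype (ι s)] (pb : ∀ s, ι s → A')
    (hcard : ∀ s, Fintype.card (ι s) = (s+1)^N)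
    (hspan : ∀ m, H m ≤ Submodule.span K (Set.range (pb m)))
    (hind : ∀ s, LinearIndependent K (pb s)) (S : Set A') (hS : S.Finite)
    (hSp : ∀ s p, ∃ l ≤ N * s, pb s p ∈ Submodule.span K S ^ l) :
    gkDim K A' = N := by
  have H_pow : ∀ (r : ℕ) (V : Submodule K A'), V ≤ H r → ∀ i, V ^ i ≤ H (r * i) := by
    intro r V hV i
    induction i with
    | zero =>
      rw [pow_zero, Submodule.one_le]
      exact H_one
    | succ i ih =>
      rw [pow_succ, Submodule.mul_le]
      intro x hx y hy
      exact H_mul _ _ _ _ (ih hx) (hV hy)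
  have H_sum : ∀ (r : ℕ) (V : Submodule K A'), V ≤ H r → ∀ m,
      (Finset.range (m + 1)).sum (fun i => V ^ i) ≤ H (r * m) := by
    intro r V hV m
    refine Finset.sum_induction _ (· ≤ H (r * m)) ?_ bot_le ?_
    · intro a b ha hb
      rw [Submodule.add_eq_sup]; exact sup_le ha hb
    · intro i hi
      exact (H_pow r V hV i).trans (H_mono _ _ (Nat.mul_le_mul_left _
        (by simpa [Nat.lt_succ_iff] using hi)))
  have H_fd : ∀ V : Submodule K A', FiniteDimensional K V → ∃ r, V ≤ H r := by
    intro V hV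
    have hfg : V.FG := Module.Finite.iff_fg.1 hV
    obtain ⟨S, rfl⟩ := hfg
    choose r hr using H_exhaust
    refine ⟨S.sup r, Submodule.span_le.2 ?_⟩
    intro x hx
    exact H_mono _ _ (Finset.le_sup (f := r) hx) (hr x)
  have hfin : ∀ m, FiniteDimensional K (Submodule.span K (Set.range (pb m))) := fun m =>
    FiniteDimensional.span_of_finite K (Set.finite_range _)
  apply le_antisymm
  · refine iSup_le ?_
    rintro ⟨V, hV⟩
    obtain ⟨r, hr⟩ := H_fd V hV
    refine gk_upper (fun m => Module.finrank K ((Finset.range (m + 1)).sum (fun i => V ^ i) :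
      Submodule K A')) ((r+1:ℝ)^N) (by positivity) _ ?_
    intro m hm
    have h2 := Submodule.finrank_mono ((H_sum r V hr m).trans (hspan _))
    have h2' := h2.trans (finrank_range_le_card (R := K) (pb (r * m)))
    rw [hcard] at h2'
    have h3 : (r*m+1)^N ≤ ((r+1)*m)^N := Nat.pow_le_pow_left (by nlinarith) _
    rw [← mul_pow]
    exact_mod_cast h2'.trans h3
  · have hVfd : FiniteDimensional K (Submodule.span K S) := FiniteDimensional.span_of_finite K hS
    refine le_trans ?_ (le_iSup _ ⟨Submodule.span K S, hVfd⟩)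
    obtain ⟨r, hr⟩ := H_fd _ hVfd
    refine gk_lower (fun m => Module.finrank K ((Finset.range (m + 1)).sum
      (fun i => Submodule.span K S ^ i) : Submodule K A')) ((1/(N:ℝ))^N) (by positivity) _ ?_
    intro m hm
    have h1 := (H_sum r _ hr m).trans (hspan _)
    set W := ((Finset.range (m + 1)).sum (fun i => Submodule.span K S ^ i) : Submodule K A') with hW
    have hfd : FiniteDimensional K W := Submodule.finiteDimensional_of_le h1
    set s := m / N with hs
    have hsm : N * s ≤ m := Nat.mul_div_le _ _
    have h2 : Submodule.span K (Set.range (pb s)) ≤ W := by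
      apply Submodule.span_le.2
      rintro _ ⟨p, rfl⟩
      obtain ⟨l, hl, hp⟩ := hSp s p
      have hle : Submodule.span K S ^ l ≤ W := by
        rw [hW, ← Finset.add_sum_erase _ _ (Finset.mem_range.2 (by omega : l < m + 1)),
          Submodule.add_eq_sup]
        exact le_sup_left
      exact hle hp
    have h3 := Submodule.finrank_mono h2
    rw [finrank_span_eq_card (hind s), hcard] at h3
    have h4 : (m:ℝ) ≤ N * (s+1) := by
      have : m ≤ N*(s+1) := (Nat.lt_mul_div_succ m hN).le
      exact_mod_cast this
    have hN' : (0:ℝ) < N := by exact_mod_cast hN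
    calc (1/(N:ℝ))^N * (m:ℝ)^N = (m/(N:ℝ))^N := by rw [← mul_pow]; ring
      _ ≤ ((s:ℝ)+1)^N := by
        gcongr
        rw [div_le_iff₀ hN']
        linarith
      _ ≤ _ := by exact_mod_cast h3

end Growth

namespace DownUp
section Rep
variable {K : Type} [Field K] {n : ℕ}

abbrev Mod (K : Type) [Field K] (n : ℕ) := (ℕ × ℕ × ℕ) →₀ MvPolynomial (Fin n) K

noncomputable def ee (i j k : ℕ) : Mod K n := Finsupp.single (i, j, k) 1

noncomputable def uM : Mod K n →ₗ[MvPolynomial (Fin n) K] Mod K n :=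
  Finsupp.linearCombination _ (fun p => ee (p.1 + 1) p.2.1 p.2.2)

@[simp] lemma uM_ee (i j k : ℕ) : uM (ee i j k : Mod K n) = ee (i+1) j k := by
  simp [uM, ee]

noncomputable def dd (α β φ : MvPolynomial (Fin n) K) (F : ℕ → ℕ → Mod K n) (j k : ℕ) :
    ℕ → Mod K n
  | 0 => F j k
  | 1 => ee 0 (j+1) k
  | (i+2) => α • uM (dd α β φ F j k (i+1)) + β • uM (uM (dd α β φ F j k i)) + φ • ee (i+1) j k

noncomputable def dL (α β φ : MvPolynomial (Fin n) K) (F : ℕ → ℕ → Mod K n) :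
    Mod K n →ₗ[MvPolynomial (Fin n) K] Mod K n :=
  Finsupp.linearCombination _ (fun p => dd α β φ F p.2.1 p.2.2 p.1)

@[simp] lemma dL_ee (α β φ : MvPolynomial (Fin n) K) (F : ℕ → ℕ → Mod K n) (i j k : ℕ) :
    dL α β φ F (ee i j k) = dd α β φ F j k i := by
  simp [dL, ee]

/-- Submodule of `Mod` spanned by the basis vectors with middle index at most `J`. -/
noncomputable def MJ (K : Type) [Field K] (n : ℕ) (J : ℕ) :
    Submodule (MvPolynomial (Fin n) K) (Mod K n) :=
  Submodule.span _ {z | ∃ i j k, j ≤ J ∧ z = ee i j k}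

lemma ee_mem {i j k J : ℕ} (h : j ≤ J) : (ee i j k : Mod K n) ∈ MJ K n J :=
  Submodule.subset_span ⟨i, j, k, h, rfl⟩

lemma MJ_mono {J J' : ℕ} (h : J ≤ J') : MJ K n J ≤ MJ K n J' := by
  apply Submodule.span_mono
  rintro z ⟨i, j, k, hj, rfl⟩
  exact ⟨i, j, k, hj.trans h, rfl⟩

lemma uM_mem {J : ℕ} {z : Mod K n} (h : z ∈ MJ K n J) : uM z ∈ MJ K n J := by
  have : MJ K n J ≤ (MJ K n J).comap uM := by
    apply Submodule.span_le.2
    rintro z ⟨i, j, k, hj, rfl⟩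
    simpa using ee_mem hj
  exact this h

lemma dd_mem (α β φ : MvPolynomial (Fin n) K) (F : ℕ → ℕ → Mod K n) {j k : ℕ}
    (hF : F j k ∈ MJ K n j) (i : ℕ) : dd α β φ F j k i ∈ MJ K n (j+1) := by
  induction i using Nat.twoStepInduction with
  | zero => exact MJ_mono (Nat.le_succ _) hF
  | one => exact ee_mem le_rfl
  | more i h1 h2 =>
    exact Submodule.add_mem _ (Submodule.add_mem _ (Submodule.smul_mem _ _ (uM_mem h2))
      (Submodule.smul_mem _ _ (uM_mem (uM_mem h1)))) (Submodule.smul_mem _ _ (ee_mem (Nat.le_succ _)))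

lemma dL_mem (α β φ : MvPolynomial (Fin n) K) (F : ℕ → ℕ → Mod K n) {J : ℕ}
    (hF : ∀ j ≤ J, ∀ k, F j k ∈ MJ K n j) {z : Mod K n} (hz : z ∈ MJ K n J) :
    dL α β φ F z ∈ MJ K n (J+1) := by
  have : MJ K n J ≤ (MJ K n (J+1)).comap (dL α β φ F) := by
    apply Submodule.span_le.2
    rintro z ⟨i, j, k, hj, rfl⟩
    simpa using MJ_mono (by omega) (dd_mem α β φ F (hF j hj k) i)
  exact this hz

lemma dd_congr (α β φ : MvPolynomial (Fin n) K) (F G : ℕ → ℕ → Mod K n) {j k : ℕ}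
    (h : F j k = G j k) (i : ℕ) : dd α β φ F j k i = dd α β φ G j k i := by
  induction i using Nat.twoStepInduction with
  | zero => exact h
  | one => rfl
  | more i h1 h2 => simp only [dd, h1, h2]

lemma dL_congr (α β φ : MvPolynomial (Fin n) K) (F G : ℕ → ℕ → Mod K n) {J : ℕ}
    (h : ∀ j ≤ J, ∀ k, F j k = G j k) {z : Mod K n} (hz : z ∈ MJ K n J) :
    dL α β φ F z = dL α β φ G z := by
  have : MJ K n J ≤ LinearMap.eqLocus (dL α β φ F) (dL α β φ G) := by
    apply Submodule.span_le.2
    rintro z ⟨i, j, k, hj, rfl⟩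
    simpa using dd_congr α β φ F G (h j hj k) i
  exact this hz

/-- The action of `d` on the basis vectors `ee 0 j k`. -/
noncomputable def EE (α β φ : MvPolynomial (Fin n) K) : ℕ → ℕ → Mod K n
  | 0, k => ee 0 0 (k+1)
  | (j+1), k =>
    let F : ℕ → ℕ → Mod K n := fun j' k' => if _h : j' < j + 1 then EE α β φ j' k' else 0
    α • dL α β φ F (uM (EE α β φ j k)) + β • uM (dL α β φ F (EE α β φ j k)) + φ • EE α β φ j k
  termination_by j _ => j

lemma EE_mem (α β φ : MvPolynomial (Fin n) K) (j : ℕ) : ∀ k, EE α β φ j k ∈ MJ K n j := by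
  induction j using Nat.strong_induction_on with
  | _ j ih =>
    intro k
    cases j with
    | zero => rw [EE]; exact ee_mem le_rfl
    | succ j =>
      rw [EE]
      have hF : ∀ j' ≤ j, ∀ k', (fun j' k' => if h : j' < j + 1 then EE α β φ j' k' else 0) j' k'
          ∈ MJ K n j' := by
        intro j' hj' k'
        simp only [Nat.lt_succ_of_le hj', dite_true]
        exact ih j' (by omega) k'
      have h0 := ih j (by omega) k
      exact Submodule.add_mem _ (Submodule.add_mem _
        (Submodule.smul_mem _ _ (dL_mem α β φ _ hF (uM_mem h0)))
        (Submodule.smul_mem _ _ (uM_mem (dL_mem α β φ _ hF h0))))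
        (Submodule.smul_mem _ _ (MJ_mono (Nat.le_succ _) h0))

noncomputable def dM (α β φ : MvPolynomial (Fin n) K) :
    Mod K n →ₗ[MvPolynomial (Fin n) K] Mod K n := dL α β φ (EE α β φ)

lemma EE_succ (α β φ : MvPolynomial (Fin n) K) (j k : ℕ) :
    EE α β φ (j+1) k = α • dM α β φ (uM (EE α β φ j k)) + β • uM (dM α β φ (EE α β φ j k))
      + φ • EE α β φ j k := by
  rw [EE]
  have h0 := EE_mem α β φ j k
  have hc : ∀ j' ≤ j, ∀ k', (fun j' k' => if h : j' < j + 1 then EE α β φ j' k' else 0) j' k'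
          = EE α β φ j' k' := by
    intro j' hj' k'
    simp only [Nat.lt_succ_of_le hj', dite_true]
  rw [dL_congr α β φ _ _ hc h0, dL_congr α β φ _ _ hc (uM_mem h0)]
  rfl

lemma dM_zero (α β φ : MvPolynomial (Fin n) K) (j k : ℕ) :
    dM α β φ (ee 0 j k) = EE α β φ j k := by
  simp [dM, dd]

lemma dM_zz (α β φ : MvPolynomial (Fin n) K) (k : ℕ) :
    dM α β φ (ee 0 0 k) = ee 0 0 (k+1) := by
  rw [dM_zero, EE]

lemma dM_one (α β φ : MvPolynomial (Fin n) K) (j k : ℕ) :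
    dM α β φ (ee 1 j k) = ee 0 (j+1) k := by
  simp [dM, dd]

lemma ext_ee {f g : Mod K n →ₗ[MvPolynomial (Fin n) K] Mod K n}
    (h : ∀ i j k, f (ee i j k) = g (ee i j k)) : f = g := by
  apply Finsupp.lhom_ext'
  rintro ⟨i, j, k⟩
  apply LinearMap.ext_ring
  exact h i j k

lemma duu_M (α β φ : MvPolynomial (Fin n) K) (v : Mod K n) :
    dM α β φ (uM (uM v)) = α • uM (dM α β φ (uM v)) + β • uM (uM (dM α β φ v)) + φ • uM v := by
  have : dM α β φ ∘ₗ uM ∘ₗ uM = α • (uM ∘ₗ dM α β φ ∘ₗ uM) + β • (uM ∘ₗ uM ∘ₗ dM α β φ)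
      + φ • uM := by
    apply ext_ee
    intro i j k
    simp [dM, dd]
  exact LinearMap.congr_fun this v

lemma ddu_M_ee (α β φ : MvPolynomial (Fin n) K) (i j k : ℕ) :
    dM α β φ (dM α β φ (uM (ee i j k))) = α • dM α β φ (uM (dM α β φ (ee i j k)))
      + β • uM (dM α β φ (dM α β φ (ee i j k))) + φ • dM α β φ (ee i j k) := by
  induction i with
  | zero => rw [uM_ee, dM_one, dM_zero, dM_zero, EE_succ]
  | succ i ih =>
    rw [← uM_ee]
    set v : Mod K n := ee i j k
    have h2 : dM α β φ (uM (uM (dM α β φ v))) = uM (dM α β φ (dM α β φ (uM v))) := by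
      rw [duu_M, ih]; simp
    rw [duu_M]
    simp only [map_add, map_smul, h2]

lemma ddu_M (α β φ : MvPolynomial (Fin n) K) (v : Mod K n) :
    dM α β φ (dM α β φ (uM v)) = α • dM α β φ (uM (dM α β φ v))
      + β • uM (dM α β φ (dM α β φ v)) + φ • dM α β φ v := by
  have : dM α β φ ∘ₗ dM α β φ ∘ₗ uM = α • (dM α β φ ∘ₗ uM ∘ₗ dM α β φ)
      + β • (uM ∘ₗ dM α β φ ∘ₗ dM α β φ) + φ • dM α β φ :=
    ext_ee (ddu_M_ee α β φ)
  exact LinearMap.congr_fun this v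

noncomputable def genM (α β φ : MvPolynomial (Fin n) K) :
    Gen → Module.End (MvPolynomial (Fin n) K) (Mod K n)
  | Gen.u => uM
  | Gen.d => dM α β φ

noncomputable def rho (α β : K) (φ : MvPolynomial (Fin n) K) :
    A α β φ →ₐ[MvPolynomial (Fin n) K] Module.End (MvPolynomial (Fin n) K) (Mod K n) :=
  RingQuot.liftAlgHom (MvPolynomial (Fin n) K)
    ⟨FreeAlgebra.lift (MvPolynomial (Fin n) K) (genM (C α) (C β) φ), by
      intro x y h
      cases h with
      | ddu =>
        rw [← algebraMap_smul (MvPolynomial (Fin n) K) α, ← algebraMap_smul (MvPolynomial (Fin n) K) β]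
        refine LinearMap.ext fun v => ?_
        simpa [uF, dF, FreeAlgebra.lift_ι_apply, genM, Module.End.mul_apply,
          Module.algebraMap_end_apply, MvPolynomial.algebraMap_eq] using ddu_M (C α) (C β) φ v
      | duu =>
        rw [← algebraMap_smul (MvPolynomial (Fin n) K) α, ← algebraMap_smul (MvPolynomial (Fin n) K) β]
        refine LinearMap.ext fun v => ?_
        simpa [uF, dF, FreeAlgebra.lift_ι_apply, genM, Module.End.mul_apply,
          Module.algebraMap_end_apply, MvPolynomial.algebraMap_eq] using duu_M (C α) (C β) φ v⟩

variable (α β : K) (φ : MvPolynomial (Fin n) K)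

lemma U_eq : U α β φ = RingQuot.mkAlgHom (MvPolynomial (Fin n) K) (Rel α β φ) uF := by
  simp only [U, RingQuot.mkAlgHom, RingQuot.mkRingHom]; rfl

lemma D_eq : D α β φ = RingQuot.mkAlgHom (MvPolynomial (Fin n) K) (Rel α β φ) dF := by
  simp only [D, RingQuot.mkAlgHom, RingQuot.mkRingHom]; rfl

lemma rho_U : rho α β φ (U α β φ) = uM := by
  rw [U_eq, rho, RingQuot.liftAlgHom_mkAlgHom_apply]
  simp [uF, genM]

lemma rho_D : rho α β φ (D α β φ) = dM (C α) (C β) φ := by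
  rw [D_eq, rho, RingQuot.liftAlgHom_mkAlgHom_apply]
  simp [dF, genM]

noncomputable def bb (i j k : ℕ) : A α β φ :=
  U α β φ ^ i * ((D α β φ * U α β φ) ^ j * D α β φ ^ k)

lemma rho_bb (i j k : ℕ) : rho α β φ (bb α β φ i j k) (ee 0 0 0) = ee i j k := by
  simp only [bb, map_mul, map_pow, rho_U, rho_D, Module.End.mul_apply]
  have h1 : ∀ k, (dM (C α) (C β) φ ^ k) (ee 0 0 0 : Mod K n) = ee 0 0 k := by
    intro k
    induction k with
    | zero => rfl
    | succ k ih => rw [pow_succ', Module.End.mul_apply, ih, dM_zz]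
  have h2 : ∀ j, (HPow.hPow (α := Module.End (MvPolynomial (Fin n) K) (Mod K n)) (γ := Module.End (MvPolynomial (Fin n) K) (Mod K n)) (dM (C α) (C β) φ * uM) j) (ee 0 0 k : Mod K n) = ee 0 j k := by
    intro j
    induction j with
    | zero => rfl
    | succ j ih => rw [pow_succ', Module.End.mul_apply, ih, Module.End.mul_apply, uM_ee, dM_one]
  have h3 : ∀ i, (uM ^ i) (ee 0 j k : Mod K n) = ee i j k := by
    intro i
    induction i with
    | zero => rfl
    | succ i ih => rw [pow_succ', Module.End.mul_apply, ih, uM_ee]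
  rw [h1, h2, h3]

/-- PBW monomials. -/
noncomputable def pbw (p : (Fin n →₀ ℕ) × (ℕ × ℕ × ℕ)) : A α β φ :=
  (monomial p.1 (1:K)) • bb α β φ p.2.1 p.2.2.1 p.2.2.2

lemma pbw_indep : LinearIndependent K (pbw α β φ) := by
  let f : A α β φ →ₗ[K] Mod K n :=
    { toFun := fun a => rho α β φ a (ee 0 0 0)
      map_add' := by intro a b; simp
      map_smul' := by
        intro c a
        rw [← algebraMap_smul (MvPolynomial (Fin n) K) c, map_smul, LinearMap.smul_apply,
          algebraMap_smul]; rfl }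
  apply LinearIndependent.of_comp f
  have h := linearIndependent_smul (R := K) (S := MvPolynomial (Fin n) K)
    (basisMonomials (Fin n) K).linearIndependent
    (Finsupp.basisSingleOne (R := MvPolynomial (Fin n) K) (ι := ℕ × ℕ × ℕ)).linearIndependent
  convert h using 1
  funext p
  obtain ⟨a, i, j, k⟩ := p
  have : f (pbw α β φ (a, i, j, k)) = monomial a (1:K) • ee i j k := by
    change rho α β φ (monomial a (1:K) • bb α β φ i j k) (ee 0 0 0) = _
    rw [map_smul, LinearMap.smul_apply, rho_bb]
  simp only [Function.comp_apply, this, coe_basisMonomials, Finsupp.coe_basisSingleOne]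
  rfl

lemma ddu_A : D α β φ * (D α β φ * U α β φ) = (C α : MvPolynomial (Fin n) K) • (D α β φ * (U α β φ * D α β φ))
    + (C β : MvPolynomial (Fin n) K) • (U α β φ * (D α β φ * D α β φ)) + φ • D α β φ := by
  have h := RingQuot.mkAlgHom_rel (MvPolynomial (Fin n) K) (Rel.ddu (α := α) (β := β) (φ := φ))
  rw [← algebraMap_smul (MvPolynomial (Fin n) K) α, ← algebraMap_smul (MvPolynomial (Fin n) K) β] at h
  simp only [map_mul, map_add, map_smul, ← U_eq, ← D_eq, ← Algebra.smul_def, mul_assoc] at h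
  exact h

lemma duu_A : D α β φ * (U α β φ * U α β φ) = (C α : MvPolynomial (Fin n) K) • (U α β φ * (D α β φ * U α β φ))
    + (C β : MvPolynomial (Fin n) K) • (U α β φ * (U α β φ * D α β φ)) + φ • U α β φ := by
  have h := RingQuot.mkAlgHom_rel (MvPolynomial (Fin n) K) (Rel.duu (α := α) (β := β) (φ := φ))
  rw [← algebraMap_smul (MvPolynomial (Fin n) K) α, ← algebraMap_smul (MvPolynomial (Fin n) K) β] at h
  simp only [map_mul, map_add, map_smul, ← U_eq, ← D_eq, ← Algebra.commutes,
    ← Algebra.smul_def, mul_assoc] at h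
  exact h

end Rep
end DownUp
namespace DownUp
section Upper
variable {K : Type} [Field K] {n : ℕ} (α β : K) (φ : MvPolynomial (Fin n) K)

/-- Weight of `u` and `d`. -/
noncomputable def wt : ℕ := φ.totalDegree + 1

noncomputable def G (J m : ℕ) : Submodule K (A α β φ) :=
  Submodule.span K {z | ∃ (a : Fin n →₀ ℕ) (i j k : ℕ), j ≤ J ∧ a.degree + wt φ * (i+2*j+k) ≤ m ∧
    z = monomial a (1:K) • bb α β φ i j k}

variable {α β φ}

lemma G_gen {J m : ℕ} (a : Fin n →₀ ℕ) (i j k : ℕ) (hj : j ≤ J)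
    (h : a.degree + wt φ * (i+2*j+k) ≤ m) : monomial a (1:K) • bb α β φ i j k ∈ G α β φ J m :=
  Submodule.subset_span ⟨a, i, j, k, hj, h, rfl⟩

lemma G_gen0 {J m : ℕ} (i j k : ℕ) (hj : j ≤ J)
    (h : wt φ * (i+2*j+k) ≤ m) : bb α β φ i j k ∈ G α β φ J m := by
  have := G_gen (α := α) (β := β) (φ := φ) (J := J) (m := m) 0 i j k hj (by simpa using h)
  rwa [show (monomial (0 : Fin n →₀ ℕ) (1:K)) = 1 from rfl, one_smul] at this

lemma G_mono {J J' m m' : ℕ} (hJ : J ≤ J') (hm : m ≤ m') : G α β φ J m ≤ G α β φ J' m' := by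
  apply Submodule.span_mono
  rintro z ⟨a, i, j, k, hj, h, rfl⟩
  exact ⟨a, i, j, k, hj.trans hJ, h.trans hm, rfl⟩

lemma G_le_diag {J m : ℕ} : G α β φ J m ≤ G α β φ m m := by
  apply Submodule.span_mono
  rintro z ⟨a, i, j, k, hj, h, rfl⟩
  refine ⟨a, i, j, k, ?_, h, rfl⟩
  have : 1 ≤ wt φ := by simp [wt]
  nlinarith

lemma G_map (f : A α β φ →ₗ[K] A α β φ) {J m : ℕ} {N : Submodule K (A α β φ)}
    (hf : ∀ (a : Fin n →₀ ℕ) (i j k : ℕ), j ≤ J → a.degree + wt φ * (i+2*j+k) ≤ m →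
      f (monomial a (1:K) • bb α β φ i j k) ∈ N) {z : A α β φ} (hz : z ∈ G α β φ J m) : f z ∈ N := by
  have : G α β φ J m ≤ N.comap f := by
    apply Submodule.span_le.2
    rintro z ⟨a, i, j, k, hj, h, rfl⟩
    exact hf a i j k hj h
  exact this hz

lemma mon_mem {J m : ℕ} (b : Fin n →₀ ℕ) {z : A α β φ} (hz : z ∈ G α β φ J m) :
    monomial b (1:K) • z ∈ G α β φ J (m + b.degree) := by
  refine G_map ((LinearMap.lsmul (MvPolynomial (Fin n) K) (A α β φ) (monomial b (1:K))).restrictScalars K) ?_ hz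
  intro a i j k hj h
  change monomial b (1:K) • monomial a (1:K) • bb α β φ i j k ∈ _
  rw [smul_smul, monomial_mul, one_mul]
  apply G_gen _ _ _ _ hj
  rw [map_add]
  omega

lemma poly_mem {J m e : ℕ} (p : MvPolynomial (Fin n) K) (hp : p.totalDegree ≤ e) {z : A α β φ}
    (hz : z ∈ G α β φ J m) : p • z ∈ G α β φ J (m + e) := by
  rw [p.as_sum, Finset.sum_smul]
  apply Submodule.sum_mem
  intro a ha
  have h1 : monomial a (coeff a p) = coeff a p • monomial a (1:K) := by
    rw [smul_monomial]; simp
  rw [h1, smul_assoc]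
  apply Submodule.smul_mem
  refine G_mono le_rfl ?_ (mon_mem a hz)
  have := le_totalDegree ha
  have h2 : a.degree = a.sum fun _ e => e := rfl
  omega

lemma C_mem {J m : ℕ} (c : K) {z : A α β φ}
    (hz : z ∈ G α β φ J m) : (C c : MvPolynomial (Fin n) K) • z ∈ G α β φ J m :=
  poly_mem (e := 0) (C c) (by simp) hz

lemma U_bb (i j k : ℕ) : U α β φ * bb α β φ i j k = bb α β φ (i+1) j k := by
  simp only [bb, pow_succ', mul_assoc]

lemma U_mem {J m : ℕ} {z : A α β φ} (hz : z ∈ G α β φ J m) :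
    U α β φ * z ∈ G α β φ J (m + wt φ) := by
  refine G_map (LinearMap.mulLeft K (U α β φ)) ?_ hz
  intro a i j k hj h
  rw [LinearMap.mulLeft_apply, mul_smul_comm, U_bb]
  apply G_gen _ _ _ _ hj
  nlinarith

lemma phi_mem {J m : ℕ} {z : A α β φ}
    (hz : z ∈ G α β φ J m) : φ • z ∈ G α β φ J (m + wt φ) :=
  poly_mem φ (by simp [wt]) hz

lemma D_bb_of {j k : ℕ} (h0 : D α β φ * bb α β φ 0 j k ∈ G α β φ j (wt φ * (2*j+k+1))) (i : ℕ) :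
    D α β φ * bb α β φ i j k ∈ G α β φ (j+1) (wt φ * (i+2*j+k+1)) := by
  induction i using Nat.twoStepInduction with
  | zero => exact G_mono (Nat.le_succ _) (by simp) h0
  | one =>
    have : D α β φ * bb α β φ 1 j k = bb α β φ 0 (j+1) k := by
      simp only [bb, pow_succ', pow_zero, one_mul, mul_one, mul_assoc]
    rw [this]
    apply G_gen0 _ _ _ le_rfl
    apply Nat.mul_le_mul_left; omega
  | more i h1 h2 =>
    rw [← U_bb, ← U_bb]
    have : D α β φ * (U α β φ * (U α β φ * bb α β φ i j k)) =
        (C α : MvPolynomial (Fin n) K) • (U α β φ * (D α β φ * bb α β φ (i+1) j k))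
        + (C β : MvPolynomial (Fin n) K) • (U α β φ * (U α β φ * (D α β φ * bb α β φ i j k)))
        + φ • bb α β φ (i+1) j k := by
      have := congrArg (· * bb α β φ i j k) (duu_A α β φ)
      simp only [add_mul, smul_mul_assoc, mul_assoc, U_bb] at this ⊢
      exact this
    rw [this]
    refine Submodule.add_mem _ (Submodule.add_mem _ (C_mem _ ?_) (C_mem _ ?_)) ?_
    · exact G_mono le_rfl (by nlinarith) (U_mem h2)
    · exact G_mono le_rfl (by nlinarith) (U_mem (U_mem h1))
    · refine G_mono le_rfl ?_ (phi_mem (G_gen0 (J := j+1) (i+1) j k (Nat.le_succ _) le_rfl))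
      nlinarith

lemma D_mem_of {J m : ℕ} (h : ∀ j ≤ J, ∀ k,
    D α β φ * bb α β φ 0 j k ∈ G α β φ j (wt φ * (2*j+k+1))) {z : A α β φ}
    (hz : z ∈ G α β φ J m) : D α β φ * z ∈ G α β φ (J+1) (m + wt φ) := by
  refine G_map (LinearMap.mulLeft K (D α β φ)) ?_ hz
  intro a i j k hj hm
  rw [LinearMap.mulLeft_apply, mul_smul_comm]
  refine G_mono (Nat.succ_le_succ hj) ?_ (mon_mem a (D_bb_of (h j hj k) i))
  nlinarith

lemma D_bb_zero (j : ℕ) : ∀ k, D α β φ * bb α β φ 0 j k ∈ G α β φ j (wt φ * (2*j+k+1)) := by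
  induction j using Nat.strong_induction_on with
  | _ j ih =>
    intro k
    cases j with
    | zero =>
      have : D α β φ * bb α β φ 0 0 k = bb α β φ 0 0 (k+1) := by
        simp only [bb, pow_succ', pow_zero, one_mul]
      rw [this]
      exact G_gen0 _ _ _ le_rfl (Nat.mul_le_mul_left _ (by omega))
    | succ j =>
      have hk := ih j (by omega) k
      have hD : ∀ j' ≤ j, ∀ k,
          D α β φ * bb α β φ 0 j' k ∈ G α β φ j' (wt φ * (2*j'+k+1)) :=
        fun j' hj' k => ih j' (by omega) k
      have : D α β φ * bb α β φ 0 (j+1) k =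
          (C α : MvPolynomial (Fin n) K) • (D α β φ * (U α β φ * (D α β φ * bb α β φ 0 j k)))
          + (C β : MvPolynomial (Fin n) K) • (U α β φ * (D α β φ * (D α β φ * bb α β φ 0 j k)))
          + φ • (D α β φ * bb α β φ 0 j k) := by
        have := congrArg (· * bb α β φ 0 j k) (ddu_A α β φ)
        simp only [add_mul, smul_mul_assoc, mul_assoc] at this
        rw [← this]
        simp only [bb, pow_succ', pow_zero, one_mul, mul_assoc]
      rw [this]
      refine Submodule.add_mem _ (Submodule.add_mem _ (C_mem _ ?_) (C_mem _ ?_)) ?_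
      · exact G_mono le_rfl (by nlinarith) (D_mem_of hD (U_mem hk))
      · exact G_mono le_rfl (by nlinarith) (U_mem (D_mem_of hD hk))
      · exact G_mono (Nat.le_succ _) (by nlinarith) (phi_mem hk)

lemma D_mem {J m : ℕ} {z : A α β φ} (hz : z ∈ G α β φ J m) :
    D α β φ * z ∈ G α β φ (J+1) (m + wt φ) :=
  D_mem_of (fun j _ k => D_bb_zero j k) hz

variable (α β φ) in
noncomputable def H (m : ℕ) : Submodule K (A α β φ) := G α β φ m m

lemma H_mono {m m' : ℕ} (h : m ≤ m') : H α β φ m ≤ H α β φ m' := G_mono h h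

lemma H_U {m : ℕ} {z : A α β φ} (hz : z ∈ H α β φ m) : U α β φ * z ∈ H α β φ (m + wt φ) :=
  G_le_diag (U_mem hz)

lemma H_D {m : ℕ} {z : A α β φ} (hz : z ∈ H α β φ m) : D α β φ * z ∈ H α β φ (m + wt φ) :=
  G_le_diag (D_mem hz)

lemma H_poly {m : ℕ} (p : MvPolynomial (Fin n) K) {z : A α β φ} (hz : z ∈ H α β φ m) :
    p • z ∈ H α β φ (m + p.totalDegree) :=
  G_le_diag (poly_mem p le_rfl hz)

lemma H_one : (1 : A α β φ) ∈ H α β φ 0 := by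
  have := G_gen0 (α := α) (β := β) (φ := φ) (J := 0) (m := 0) 0 0 0 le_rfl (by simp)
  have e : bb α β φ 0 0 0 = 1 := by simp [bb]
  rw [e] at this
  exact this

lemma H_bb (i j k : ℕ) {m : ℕ} {z : A α β φ} (hz : z ∈ H α β φ m) :
    bb α β φ i j k * z ∈ H α β φ (m + wt φ * (i + 2*j+k)) := by
  have h1 : ∀ k, D α β φ ^ k * z ∈ H α β φ (m + wt φ * k) := by
    intro k
    induction k with
    | zero => simpa using hz
    | succ k ih =>
      rw [pow_succ', mul_assoc]
      exact H_mono (by nlinarith) (H_D ih)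
  have h2 : ∀ j, (D α β φ * U α β φ) ^ j * (D α β φ ^ k * z) ∈ H α β φ (m + wt φ * (2*j+k)) := by
    intro j
    induction j with
    | zero => simpa using h1 k
    | succ j ih =>
      rw [pow_succ', mul_assoc, mul_assoc]
      exact H_mono (by nlinarith) (H_D (H_U ih))
  rw [bb, mul_assoc, mul_assoc]
  induction i with
  | zero => simpa using h2 j
  | succ i ih =>
      rw [pow_succ', mul_assoc]
      exact H_mono (by nlinarith) (H_U ih)

lemma H_mul {r m : ℕ} : H α β φ r * H α β φ m ≤ H α β φ (r + m) := by
  rw [Submodule.mul_le]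
  intro x hx z hz
  refine G_map (LinearMap.mulRight K z) ?_ hx
  intro a i j k hj h
  rw [LinearMap.mulRight_apply, smul_mul_assoc]
  exact H_mono (by omega) (G_le_diag (mon_mem a (H_bb i j k hz)))

lemma H_exhaust (x : A α β φ) : ∃ r, x ∈ H α β φ r := by
  suffices h : ∀ f : F K n, ∀ m, ∀ z ∈ H α β φ m, ∃ r,
      RingQuot.mkAlgHom (MvPolynomial (Fin n) K) (Rel α β φ) f * z ∈ H α β φ r by
    obtain ⟨f, rfl⟩ := RingQuot.mkAlgHom_surjective (MvPolynomial (Fin n) K) (Rel α β φ) x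
    obtain ⟨r, hr⟩ := h f 0 1 H_one
    exact ⟨r, by simpa using hr⟩
  intro f
  induction f using FreeAlgebra.induction with
  | grade0 p =>
    intro m z hz
    rw [AlgHom.commutes, ← Algebra.smul_def]
    exact ⟨_, H_poly p hz⟩
  | grade1 g =>
    intro m z hz
    cases g with
    | u => exact ⟨_, by have := H_U hz; rwa [U_eq] at this⟩
    | d => exact ⟨_, by have := H_D hz; rwa [D_eq] at this⟩
  | mul a b ha hb =>
    intro m z hz
    obtain ⟨r, hr⟩ := hb m z hz
    obtain ⟨s, hs⟩ := ha r _ hr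
    exact ⟨s, by rwa [map_mul, mul_assoc]⟩
  | add a b ha hb =>
    intro m z hz
    obtain ⟨r, hr⟩ := hb m z hz
    obtain ⟨s, hs⟩ := ha m z hz
    refine ⟨max r s, ?_⟩
    rw [map_add, add_mul]
    exact Submodule.add_mem _ (H_mono (le_max_right _ _) hs) (H_mono (le_max_left _ _) hr)

variable (α β φ) in
noncomputable def pbwFin (s : ℕ) (p : (Fin n → Fin (s+1)) × (Fin (s+1) × Fin (s+1) × Fin (s+1))) :
    A α β φ :=
  pbw α β φ (Finsupp.equivFunOnFinite.symm (fun l => (p.1 l : ℕ)), p.2.1, p.2.2.1, p.2.2.2)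

lemma card_idx (s : ℕ) : Fintype.card ((Fin n → Fin (s+1)) × (Fin (s+1) × Fin (s+1) × Fin (s+1)))
    = (s+1)^(n+3) := by
  simp; ring

lemma H_le_span (m : ℕ) : H α β φ m ≤ Submodule.span K (Set.range (pbwFin α β φ m)) := by
  apply Submodule.span_mono
  rintro z ⟨a, i, j, k, hj, h, rfl⟩
  have hw : 1 ≤ wt φ := by simp [wt]
  have ha : ∀ l, a l < m + 1 := by
    intro l
    have := Finsupp.le_degree l a
    nlinarith
  refine ⟨(fun l => ⟨a l, ha l⟩, ⟨i, by nlinarith⟩, ⟨j, by nlinarith⟩, ⟨k, by nlinarith⟩), ?_⟩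
  have : Finsupp.equivFunOnFinite.symm (fun l => a l) = a := by ext; simp
  simp only [pbwFin, this]
  rfl

lemma pbwFin_indep (s : ℕ) : LinearIndependent K (pbwFin α β φ s) := by
  apply (pbw_indep α β φ).comp
  rintro ⟨a, i, j, k⟩ ⟨a', i', j', k'⟩ h
  simp only [Prod.mk.injEq, EmbeddingLike.apply_eq_iff_eq, Fin.val_inj] at h
  obtain ⟨h1, h2, h3, h4⟩ := h
  have : a = a' := by
    funext l
    exact Fin.ext (congrFun h1 l)
  simp [this, h2, h3, h4]

variable (α β φ) in
def VS : Set (A α β φ) := {1, U α β φ, D α β φ, D α β φ * U α β φ} ∪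
    Set.range (fun l : Fin n => algebraMap (MvPolynomial (Fin n) K) (A α β φ) (X l))

variable (α β φ) in
lemma VS_fin : (VS α β φ).Finite :=
  Set.Finite.union (Set.toFinite _) (Set.finite_range _)

variable (α β φ) in
noncomputable def VV : Submodule K (A α β φ) := Submodule.span K (VS α β φ)

lemma VV_mem_mono (a : Fin n →₀ ℕ) :
    algebraMap (MvPolynomial (Fin n) K) (A α β φ) (monomial a (1:K)) ∈ VV α β φ ^ a.degree := by
  induction a using Finsupp.induction_linear with
  | zero =>
    rw [show (monomial (0 : Fin n →₀ ℕ) (1:K)) = 1 from rfl, map_one, map_zero, pow_zero]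
    exact Submodule.one_le.1 le_rfl
  | add f g hf hg =>
    have : monomial (f + g) (1:K) = monomial f 1 * monomial g 1 := by simp [monomial_mul]
    rw [this, map_mul, map_add, pow_add]
    exact Submodule.mul_mem_mul hf hg
  | single l e =>
    rw [← X_pow_eq_monomial, map_pow, Finsupp.degree_single]
    apply Submodule.pow_mem_pow
    exact Submodule.subset_span (Or.inr ⟨l, rfl⟩)

lemma VV_pbw (a : Fin n →₀ ℕ) (i j k : ℕ) :
    pbw α β φ (a, i, j, k) ∈ VV α β φ ^ (a.degree + (i + (j + k))) := by
  rw [pbw, Algebra.smul_def, pow_add, pow_add, pow_add]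
  refine Submodule.mul_mem_mul (VV_mem_mono a) (Submodule.mul_mem_mul ?_ (Submodule.mul_mem_mul ?_ ?_))
  all_goals
    apply Submodule.pow_mem_pow
    apply Submodule.subset_span
    simp [VS]

lemma VV_pbwFin (s : ℕ) (p : (Fin n → Fin (s+1)) × (Fin (s+1) × Fin (s+1) × Fin (s+1))) :
    ∃ l ≤ (n+3) * s, pbwFin α β φ s p ∈ VV α β φ ^ l := by
  obtain ⟨a, i, j, k⟩ := p
  set b : Fin n →₀ ℕ := Finsupp.equivFunOnFinite.symm (fun l => (a l : ℕ)) with hb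
  have hdeg : b.degree ≤ n * s := by
    rw [Finsupp.degree_eq_sum]
    calc ∑ l, b l ≤ ∑ l : Fin n, s := Finset.sum_le_sum (fun l _ => by simp [hb]; omega)
      _ = n * s := by simp
  refine ⟨b.degree + ((i:ℕ) + ((j:ℕ) + k)), ?_, VV_pbw b i j k⟩
  have := i.2; have := j.2; have := k.2
  nlinarith

end Upper
end DownUp

open DownUp in
/-- The Gelfand–Kirillov dimension of the down-up algebra A(α,β,φ) over
K[t₁,…,tₙ] equals n+3. -/
theorem downUp_gkDim {K : Type} [Field K] {n : ℕ} (α β : K) (φ : MvPolynomial (Fin n) K) :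
    gkDim K (A α β φ) = (n : ℝ≥0∞) + 3 := by
  have h : (n : ℝ≥0∞) + 3 = ((n+3 : ℕ) : ℝ≥0∞) := by push_cast; rfl
  rw [h]
  exact gk_generic (n+3) (by omega) (H α β φ) (fun _ _ h => H_mono h) H_one
    (fun _ _ x y hx hy => H_mul (Submodule.mul_mem_mul hx hy)) H_exhaust (pbwFin α β φ) card_idx H_le_span
    pbwFin_indep (VS α β φ) (VS_fin α β φ) VV_pbwFin
end

section
/- If β ≠ 0, then the down-up algebra A(α,β,φ) over K[t₁,…,tₙ] is a domain (has no nonzero zero divisors). -/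
open MvPolynomial

namespace DownUpAux
open SkewMonoidAlgebra

abbrev G := Multiplicative ℤ

theorem skew_noZeroDiv {S : Type*} [CommRing S] [IsDomain S] [MulSemiringAction G S] :
    NoZeroDivisors (SkewMonoidAlgebra S G) := by
  classical
  refine ⟨fun {f g} hfg => ?_⟩
  by_contra! h
  obtain ⟨hf, hg⟩ := h
  have hf' : f.support.Nonempty := by
    rw [Finset.nonempty_iff_ne_empty]; simpa using hf
  have hg' : g.support.Nonempty := by
    rw [Finset.nonempty_iff_ne_empty]; simpa using hg
  set m := f.support.max' hf' with hm
  set n := g.support.max' hg' with hn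
  have hfm : f.coeff m ≠ 0 := mem_support_iff.1 (Finset.max'_mem _ hf')
  have hgn : g.coeff n ≠ 0 := mem_support_iff.1 (Finset.max'_mem _ hg')
  have key : (f * g).coeff (m * n) = f.coeff m * (m • g.coeff n) := by
    rw [SkewMonoidAlgebra.coeff_mul, sum_def', Finset.sum_eq_single m, sum_def', Finset.sum_eq_single n]
    · simp
    · intro b _ hb
      rw [if_neg]
      simpa using hb
    · intro h; exact absurd (mem_support_iff.2 hgn) h
    · intro a ha hne
      rw [sum_def']
      refine Finset.sum_eq_zero fun b hb => ?_
      rw [if_neg]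
      have h1 : a < m := lt_of_le_of_ne (Finset.le_max' _ _ ha) hne
      have h2 : b ≤ n := Finset.le_max' _ _ hb
      exact (mul_lt_mul_of_lt_of_le h1 h2).ne
    · intro h; exact absurd (mem_support_iff.2 hfm) h
  rw [hfg, SkewMonoidAlgebra.coeff_zero, Finsupp.zero_apply] at key
  rcases mul_eq_zero.1 key.symm with h | h
  · exact hfm h
  · exact hgn ((smul_eq_zero_iff_eq m).1 h)

abbrev g1 : G := Multiplicative.ofAdd 1

section
variable {R S A : Type*} [CommRing R] [CommRing S] [Algebra R S] [IsDomain S]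
    [MulSemiringAction G S] [SMulCommClass G R S] [Ring A] [Algebra R A]

/-- The monomial of degree `n`. -/
def bb (u d : A) (n : ℤ) : A := if 0 ≤ n then d ^ n.toNat else u ^ (-n).toNat

theorem bb_nat (u d : A) (n : ℕ) : bb u d n = d ^ n := by simp [bb]
theorem bb_neg (u d : A) (n : ℕ) : bb u d (-(n : ℤ)) = u ^ n := by
  rcases Nat.eq_zero_or_pos n with rfl | h
  · simp [bb]
  · rw [bb, if_neg (by omega)]; simp

theorem isDomain_of_data (x : S) (hx : x ≠ 0) (u d : A) (ι : S →ₐ[R] A)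
    (hud : u * d = ι x) (hdu : d * u = ι (g1 • x))
    (hd : ∀ s, d * ι s = ι (g1 • s) * d) (hu : ∀ s, u * ι s = ι (g1⁻¹ • s) * u)
    (hgen : Algebra.adjoin R {u, d} = ⊤)
    (Φ : A →ₐ[R] SkewMonoidAlgebra S G) (hι : ∀ s, Φ (ι s) = single 1 s)
    (hΦd : Φ d = single g1 1) (hΦu : Φ u = single g1⁻¹ x) : IsDomain A := by
  classical
  have hdb : ∀ n : ℤ, ∃ e : S, d * bb u d n = ι e * bb u d (n + 1) := by
    intro n
    obtain ⟨k, rfl | rfl⟩ := n.eq_nat_or_neg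
    · refine ⟨1, ?_⟩
      have := bb_nat u d (k + 1)
      push_cast at this
      rw [this, bb_nat, map_one, one_mul, pow_succ']
    · rcases k with _ | k
      · refine ⟨1, ?_⟩
        simp [bb]
      · refine ⟨g1 • x, ?_⟩
        rw [bb_neg, pow_succ', ← mul_assoc, hdu]
        have : -((k + 1 : ℕ) : ℤ) + 1 = -(k : ℤ) := by push_cast; ring
        rw [this, bb_neg]
  have hub : ∀ n : ℤ, ∃ e : S, u * bb u d n = ι e * bb u d (n - 1) := by
    intro n
    obtain ⟨k, rfl | rfl⟩ := n.eq_nat_or_neg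
    · rcases k with _ | k
      · refine ⟨1, ?_⟩
        simp [bb]
      · refine ⟨x, ?_⟩
        rw [bb_nat, pow_succ', ← mul_assoc, hud]
        have : ((k + 1 : ℕ) : ℤ) - 1 = (k : ℤ) := by push_cast; ring
        rw [this, bb_nat]
    · refine ⟨1, ?_⟩
      have := bb_neg u d (k + 1)
      rw [show -((k + 1 : ℕ) : ℤ) = -(k : ℤ) - 1 by push_cast; ring] at this
      rw [this, bb_neg, map_one, one_mul, pow_succ']
  let Θ : (ℤ →₀ S) →+ A := Finsupp.liftAddHom fun n =>
    (AddMonoidHom.mulRight (bb u d n)).comp (ι : S →+ A)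
  have Θs : ∀ n s, Θ (Finsupp.single n s) = ι s * bb u d n := by
    intro n s; simp [Θ]
  let I : Set A := Set.range Θ
  have hI1 : ∀ a : A, a ∈ Algebra.adjoin R {u, d} → ∀ f, ∃ f', a * Θ f = Θ f' := by
    intro a ha
    induction ha using Algebra.adjoin_induction with
    | mem a ha =>
      intro f
      induction f using Finsupp.induction_linear with
      | zero => exact ⟨0, by simp⟩
      | add f g hf hg =>
        obtain ⟨f', hf⟩ := hf
        obtain ⟨g', hg⟩ := hg
        exact ⟨f' + g', by rw [map_add, map_add, mul_add, hf, hg]⟩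
      | single n s =>
        rcases ha with rfl | rfl
        · obtain ⟨e, he⟩ := hub n
          refine ⟨Finsupp.single (n - 1) (g1⁻¹ • s * e), ?_⟩
          rw [Θs, Θs, ← mul_assoc, hu, mul_assoc, he, map_mul, mul_assoc]
        · obtain ⟨e, he⟩ := hdb n
          refine ⟨Finsupp.single (n + 1) (g1 • s * e), ?_⟩
          rw [Θs, Θs, ← mul_assoc, hd, mul_assoc, he, map_mul, mul_assoc]
    | algebraMap r =>
      intro f
      induction f using Finsupp.induction_linear with
      | zero => exact ⟨0, by simp⟩
      | add f g hf hg =>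
        obtain ⟨f', hf⟩ := hf
        obtain ⟨g', hg⟩ := hg
        exact ⟨f' + g', by rw [map_add, map_add, mul_add, hf, hg]⟩
      | single n s =>
        refine ⟨Finsupp.single n (algebraMap R S r * s), ?_⟩
        rw [Θs, Θs, map_mul, AlgHom.commutes, mul_assoc]
    | add a b _ _ ha hb =>
      intro f
      obtain ⟨f', hf⟩ := ha f
      obtain ⟨g', hg⟩ := hb f
      exact ⟨f' + g', by rw [map_add, add_mul, hf, hg]⟩
    | mul a b _ _ ha hb =>
      intro f
      obtain ⟨g', hg⟩ := hb f
      obtain ⟨f', hf⟩ := ha g'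
      exact ⟨f', by rw [mul_assoc, hg, hf]⟩
  have hsurj : Function.Surjective Θ := by
    intro a
    obtain ⟨f', hf⟩ := hI1 a (by rw [hgen]; trivial) (Finsupp.single 0 1)
    refine ⟨f', ?_⟩
    rw [← hf, Θs]; simp [bb]
  have hc : ∀ n : ℤ, ∃ c : S, c ≠ 0 ∧ Φ (bb u d n) = single (Multiplicative.ofAdd n) c := by
    intro n
    obtain ⟨k, rfl | rfl⟩ := n.eq_nat_or_neg
    · rw [bb_nat]
      refine ⟨1, one_ne_zero, ?_⟩
      induction k with
      | zero => simp
      | succ k ih =>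
        rw [pow_succ', map_mul, ih, hΦd, single_mul_single, smul_one, mul_one, ← ofAdd_add]
        congr 2; push_cast; ring
    · rw [bb_neg]
      induction k with
      | zero => exact ⟨1, one_ne_zero, by simp⟩
      | succ k ih =>
        obtain ⟨c, hc0, hc⟩ := ih
        refine ⟨x * g1⁻¹ • c, mul_ne_zero hx (by rwa [Ne, smul_eq_zero_iff_eq]), ?_⟩
        rw [pow_succ', map_mul, hc, hΦu, single_mul_single, ← ofAdd_neg, ← ofAdd_add]
        congr 2; push_cast; ring
  choose c hc0 hc using hc
  have hcomp : ∀ f n, (Φ (Θ f)).coeff (Multiplicative.ofAdd n) = f n * c n := by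
    intro f n
    induction f using Finsupp.induction_linear with
    | zero => simp
    | add f g hf hg => simp [hf, hg, add_mul]
    | single m s =>
      rw [Θs, map_mul, hι, hc, single_mul_single, coeff_single_apply, Finsupp.single_apply]
      by_cases h : m = n
      · subst h; simp
      · simp [h]
  have hinj : Function.Injective Φ := by
    rw [injective_iff_map_eq_zero]
    intro a ha
    obtain ⟨f, rfl⟩ := hsurj a
    have : f = 0 := by
      ext n
      have := hcomp f n
      rw [ha] at this
      simpa [hc0] using this.symm
    rw [this, map_zero]
  have := skew_noZeroDiv (S := S)
  have h1 : NoZeroDivisors A := hinj.noZeroDivisors Φ (map_zero _) (map_mul _)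
  have h2 : Nontrivial A := Φ.toRingHom.domain_nontrivial
  exact NoZeroDivisors.to_isDomain A

end
end DownUpAux

namespace DownUpAux
open SkewMonoidAlgebra
section
variable {R : Type} [CommRing R] {A : Type} [Ring A] [Algebra R A]

abbrev SS (R : Type*) [CommRing R] := Polynomial (Polynomial R)

noncomputable def xx : SS R := Polynomial.C Polynomial.X
noncomputable def yy : SS R := Polynomial.X

theorem comm_aux (p q : A) (h : Commute p q) (a : Polynomial R) :
    Commute (Polynomial.aeval p a) q := by
  induction a using Polynomial.induction_on' with
  | add f g hf hg => rw [map_add]; exact hf.add_left hg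
  | monomial n r =>
    rw [Polynomial.aeval_monomial]
    exact Commute.mul_left (Algebra.commutes r q) (h.pow_left n)

/-- Evaluation of a polynomial in two variables at a commuting pair. -/
noncomputable def ev (p q : A) (h : Commute p q) : SS R →ₐ[R] A :=
  { Polynomial.eval₂RingHom' ((Polynomial.aeval p : Polynomial R →ₐ[R] A) : Polynomial R →+* A) q
      (comm_aux p q h) with
    commutes' := fun r => by
      change Polynomial.eval₂ _ _ (Polynomial.C (Polynomial.C r)) = _
      simp }

@[simp] theorem ev_xx (p q : A) (h : Commute p q) : ev (R := R) p q h xx = p := by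
  
  change Polynomial.eval₂ _ _ (Polynomial.C Polynomial.X) = _
  simp

@[simp] theorem ev_yy (p q : A) (h : Commute p q) : ev (R := R) p q h yy = q := by
  
  change Polynomial.eval₂ _ _ Polynomial.X = _
  simp

theorem SS_ind {P : SS R → Prop} (h0 : ∀ r, P (algebraMap R _ r)) (hx : P xx) (hy : P yy)
    (ha : ∀ f g, P f → P g → P (f + g)) (hm : ∀ f g, P f → P g → P (f * g)) (s : SS R) : P s := by
  have hpow : ∀ f, P f → ∀ n : ℕ, P (f ^ n) := by
    intro f hf n
    induction n with
    | zero => simpa using h0 1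
    | succ n ih => rw [pow_succ]; exact hm _ _ ih hf
  have hC : ∀ a : Polynomial R, P (Polynomial.C a) := by
    intro a
    induction a using Polynomial.induction_on' with
    | add f g hf hg => rw [map_add]; exact ha _ _ hf hg
    | monomial n r =>
      rw [← Polynomial.C_mul_X_pow_eq_monomial, map_mul, map_pow]
      exact hm _ _ (h0 r) (hpow _ hx n)
  induction s using Polynomial.induction_on' with
  | add f g hf hg => exact ha _ _ hf hg
  | monomial n r =>
    rw [← Polynomial.C_mul_X_pow_eq_monomial]
    exact hm _ _ (hC r) (hpow _ hy n)

theorem SS_hom_ext {f g : SS R →ₐ[R] A} (hx : f xx = g xx) (hy : f yy = g yy) : f = g := by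
  refine AlgHom.ext fun s => ?_
  induction s using SS_ind with
  | h0 r => rw [AlgHom.commutes, AlgHom.commutes]
  | hx => exact hx
  | hy => exact hy
  | ha a b h1 h2 => simp only [map_add, h1, h2]
  | hm a b h1 h2 => simp only [map_mul, h1, h2]

/-- The automorphism `x ↦ y`, `y ↦ a y + b x + c`. -/
noncomputable def sig (a b c b' : R) (hb : b * b' = 1) : SS R ≃ₐ[R] SS R :=
  AlgEquiv.ofAlgHom (ev yy (a • yy + b • xx + algebraMap R _ c) (Commute.all _ _))
    (ev (b' • (yy - a • xx - algebraMap R _ c)) xx (Commute.all _ _))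
    (by
      apply SS_hom_ext
      · simp only [AlgHom.comp_apply, ev_xx, ev_yy, map_smul, map_sub, AlgHom.commutes,
          AlgHom.id_apply]
        rw [show a • yy + b • xx + algebraMap R (SS R) c - a • yy - algebraMap R (SS R) c
          = b • xx by ring, smul_smul, mul_comm, hb, one_smul]
      · simp)
    (by
      apply SS_hom_ext
      · simp
      · simp only [AlgHom.comp_apply, ev_xx, ev_yy, map_smul, map_add, AlgHom.commutes,
          AlgHom.id_apply]
        rw [smul_smul, hb, one_smul]; ring)

theorem sig_xx (a b c b' : R) (hb : b * b' = 1) : sig a b c b' hb xx = yy := by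
  simp [sig]
theorem sig_yy (a b c b' : R) (hb : b * b' = 1) :
    sig a b c b' hb yy = a • yy + b • xx + algebraMap R _ c := by
  simp [sig]

theorem xx_ne_zero [IsDomain R] : (xx : SS R) ≠ 0 := by
  simp [xx]

/-- Action of `ℤ` on `SS R` through an automorphism. -/
@[reducible] noncomputable def act (σ : SS R ≃ₐ[R] SS R) : MulSemiringAction G (SS R) :=
  MulSemiringAction.compHom (SS R) (zpowersHom _ σ)

theorem isDomain_of_downUp [IsDomain R] (a b c b' : R) (hb : b * b' = 1) (u d : A)
    (h1 : d * d * u = a • (d * u * d) + b • (u * d * d) + c • d)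
    (h2 : d * u * u = a • (u * d * u) + b • (u * u * d) + c • u)
    (hgen : Algebra.adjoin R {u, d} = ⊤)
    (hlift : ∀ (B : Type) [Ring B] [Algebra R B] (u' d' : B),
      d' * d' * u' = a • (d' * u' * d') + b • (u' * d' * d') + c • d' →
      d' * u' * u' = a • (u' * d' * u') + b • (u' * u' * d') + c • u' →
      ∃ Φ : A →ₐ[R] B, Φ u = u' ∧ Φ d = d') : IsDomain A := by
  let _ : MulSemiringAction G (SS R) := act (sig a b c b' hb)
  have hg : ∀ s : SS R, g1 • s = sig a b c b' hb s := by
    intro s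
    change (zpowersHom (SS R ≃ₐ[R] SS R) (sig a b c b' hb) g1) s = _
    simp [g1]
  have : SMulCommClass G R (SS R) := ⟨fun m r s => by
    change (zpowersHom (SS R ≃ₐ[R] SS R) (sig a b c b' hb) m) (r • s) =
      r • (zpowersHom (SS R ≃ₐ[R] SS R) (sig a b c b' hb) m) s
    exact map_smul _ _ _⟩
  have hgx : g1 • (xx : SS R) = yy := by rw [hg, sig_xx]
  have hgy : g1 • (yy : SS R) = a • yy + b • xx + algebraMap R _ c := by rw [hg, sig_yy]
  have hgy' : g1⁻¹ • (yy : SS R) = xx := by rw [← hgx, inv_smul_smul]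
  have hgx' : a • xx + b • (g1⁻¹ • (xx : SS R)) + algebraMap R _ c = yy := by
    apply MulAction.injective g1
    change g1 • _ = g1 • _
    rw [smul_add, smul_add, hgy, smul_comm, smul_comm g1 b, smul_inv_smul, hgx, hg (algebraMap _ _ _),
      AlgEquiv.commutes]
  have hcomm : Commute (u * d) (d * u) := by
    have e1 : u * d * (d * u) = u * (d * d * u) := by noncomm_ring
    have e2 : d * u * (u * d) = (d * u * u) * d := by noncomm_ring
    rw [Commute, SemiconjBy, e1, e2, h1, h2]
    simp only [mul_add, add_mul, mul_smul_comm, smul_mul_assoc, mul_assoc]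
  obtain ⟨Φ, hΦu, hΦd⟩ := hlift (SkewMonoidAlgebra (SS R) G) (single g1⁻¹ xx) (single g1 1)
    (by
      simp only [single_mul_single, smul_single, mul_inv_cancel, inv_mul_cancel, mul_one, one_mul,
        smul_one, mul_smul, hgx, hgy, mul_inv_cancel_right, one_smul, ← single_add]
      rw [Algebra.smul_def c, mul_one])
    (by
      simp only [single_mul_single, smul_single, mul_inv_cancel, inv_mul_cancel, mul_one, one_mul,
        smul_one, hgx, mul_smul, one_smul, inv_mul_cancel_right, mul_inv_cancel_right,
        ← single_add, hgy']
      congr 1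
      rw [← hgx']
      simp only [Algebra.smul_def]
      ring)
  refine isDomain_of_data (xx : SS R) xx_ne_zero u d (ev (u * d) (d * u) hcomm)
    (by simp) (by rw [hgx]; simp) ?_ ?_ hgen Φ ?_ hΦd hΦu
  · intro s
    induction s using SS_ind with
    | h0 r => rw [hg, AlgEquiv.commutes, AlgHom.commutes, Algebra.commutes]
    | hx => rw [hgx, ev_xx, ev_yy, mul_assoc]
    | hy =>
      rw [hgy, map_add, map_add, map_smul, map_smul, AlgHom.commutes, ev_xx, ev_yy, ← mul_assoc, h1]
      simp only [add_mul, smul_mul_assoc, Algebra.smul_def c]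
    | ha f g hf hg => rw [smul_add, map_add, map_add, mul_add, add_mul, hf, hg]
    | hm f g hf hg => rw [smul_mul', map_mul, map_mul, ← mul_assoc, hf, mul_assoc, hg, mul_assoc]
  · suffices H : ∀ s : SS R, u * ev (u * d) (d * u) hcomm (g1 • s) = ev (u * d) (d * u) hcomm s * u by
      intro s
      have := H (g1⁻¹ • s)
      rwa [smul_inv_smul] at this
    intro s
    induction s using SS_ind with
    | h0 r => rw [hg, AlgEquiv.commutes, AlgHom.commutes, Algebra.commutes]
    | hx => rw [hgx, ev_xx, ev_yy, mul_assoc]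
    | hy =>
      rw [hgy, map_add, map_add, map_smul, map_smul, AlgHom.commutes, ev_xx, ev_yy, h2]
      simp only [mul_add, mul_smul_comm, Algebra.smul_def c, mul_assoc, Algebra.commutes]
    | ha f g hf hg => rw [smul_add, map_add, map_add, mul_add, add_mul, hf, hg]
    | hm f g hf hg => rw [smul_mul', map_mul, map_mul, ← mul_assoc, hf, mul_assoc, hg, mul_assoc]
  · intro s
    induction s using SS_ind with
    | h0 r => rw [AlgHom.commutes, AlgHom.commutes]; rfl
    | hx => rw [ev_xx, map_mul, hΦu, hΦd, single_mul_single]; simp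
    | hy => rw [ev_yy, map_mul, hΦu, hΦd, single_mul_single, hgx]; simp
    | ha f g hf hg => rw [map_add, map_add, hf, hg, single_add]
    | hm f g hf hg => rw [map_mul, map_mul, hf, hg, single_mul_single]; simp
end
end DownUpAux

open DownUp in
/-- If β ≠ 0, the down-up algebra A(α,β,φ) over K[t₁,…,tₙ] is a domain. -/
theorem downUp_isDomain {K : Type} [Field K] {n : ℕ}
    (α β : K) (hβ : β ≠ 0) (φ : MvPolynomial (Fin n) K) :
    IsDomain (A α β φ) := by
  let R := MvPolynomial (Fin n) K
  let π : F K n →ₐ[R] A α β φ := RingQuot.mkAlgHom R (Rel α β φ)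
  have hK : ∀ (k : K) (f : F K n), k • f = (C k : R) • f := fun k f =>
    algebra_compatible_smul R k f
  refine DownUpAux.isDomain_of_downUp (R := R) (A := A α β φ) (C α) (C β) φ (C β⁻¹)
    (by rw [← C_mul, mul_inv_cancel₀ hβ, C_1]) (π uF) (π dF) ?_ ?_ ?_ ?_
  · have h := RingQuot.mkAlgHom_rel R (Rel.ddu (α := α) (β := β) (φ := φ))
    rw [hK, hK, ← Algebra.smul_def] at h
    simpa only [map_mul, map_add, map_smul] using h
  · have h := RingQuot.mkAlgHom_rel R (Rel.duu (α := α) (β := β) (φ := φ))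
    rw [hK, hK, ← Algebra.commutes, ← Algebra.smul_def] at h
    simpa only [map_mul, map_add, map_smul] using h
  · rw [eq_top_iff]
    intro a _
    obtain ⟨f, rfl⟩ := RingQuot.mkAlgHom_surjective R (Rel α β φ) a
    change π f ∈ _
    induction f using FreeAlgebra.induction with
    | grade0 r => rw [AlgHom.commutes]; exact Subalgebra.algebraMap_mem _ _
    | grade1 g =>
      cases g
      · exact Algebra.subset_adjoin (Or.inl rfl)
      · exact Algebra.subset_adjoin (Or.inr rfl)
    | mul f g hf hg => rw [map_mul]; exact mul_mem (hf trivial) (hg trivial)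
    | add f g hf hg => rw [map_add]; exact add_mem (hf trivial) (hg trivial)
  · intro B _ _ u' d' e1 e2
    let Ψ : F K n →ₐ[R] B := FreeAlgebra.lift R (fun g => match g with | Gen.u => u' | Gen.d => d')
    have hu : Ψ uF = u' := FreeAlgebra.lift_ι_apply _ _
    have hd : Ψ dF = d' := FreeAlgebra.lift_ι_apply _ _
    refine ⟨RingQuot.liftAlgHom R ⟨Ψ, ?_⟩, ?_, ?_⟩
    · intro x y hxy
      cases hxy with
      | ddu =>
        rw [hK, hK, ← Algebra.smul_def]
        simp only [map_mul, map_add, map_smul, hu, hd]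
        exact e1
      | duu =>
        rw [hK, hK, ← Algebra.commutes, ← Algebra.smul_def]
        simp only [map_mul, map_add, map_smul, hu, hd]
        exact e2
    · exact (RingQuot.liftAlgHom_mkAlgHom_apply R _ _ _).trans hu
    · exact (RingQuot.liftAlgHom_mkAlgHom_apply R _ _ _).trans hd
end

section
/- If β ≠ 0, then the down-up algebra A(α,β,φ) over K[t₁,…,tₙ] is left and right noetherian. -/
open MvPolynomial

namespace DownUpAux

section Base

variable {R S : Type*} [Ring R] [Ring S] (f : R →+* S) (x : S)

/-- Elements of `x`-degree less than `n`, with coefficients on the right. -/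
def Fil (n : ℕ) : AddSubgroup S :=
  AddSubgroup.closure {y | ∃ i < n, ∃ r : R, y = x ^ i * f r}

theorem mem_Fil {n i : ℕ} (h : i < n) (r : R) : x ^ i * f r ∈ Fil f x n :=
  AddSubgroup.subset_closure ⟨i, h, r, rfl⟩

theorem Fil_mono {m n : ℕ} (h : m ≤ n) : Fil f x m ≤ Fil f x n := by
  apply AddSubgroup.closure_mono
  rintro y ⟨i, hi, r, rfl⟩
  exact ⟨i, by omega, r, rfl⟩

theorem Fil_induct {n : ℕ} (H : AddSubgroup S) (g : S →+ S)
    (h : ∀ i < n, ∀ r : R, g (x ^ i * f r) ∈ H) {y : S} (hy : y ∈ Fil f x n) : g y ∈ H := by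
  have : Fil f x n ≤ H.comap g := by
    apply (AddSubgroup.closure_le _).2
    rintro y ⟨i, hi, r, rfl⟩
    exact h i hi r
  exact this hy

theorem Fil_zero {y : S} (hy : y ∈ Fil f x 0) : y = 0 := by
  have := Fil_induct f x ⊥ (AddMonoidHom.id S) (n := 0) (fun i hi => by omega) hy
  simpa using this

theorem Fil_succ {n : ℕ} {y : S} (hy : y ∈ Fil f x (n + 1)) :
    ∃ r, y - x ^ n * f r ∈ Fil f x n := by
  induction hy using AddSubgroup.closure_induction with
  | mem y h =>
    obtain ⟨i, hi, r, rfl⟩ := h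
    rcases Nat.lt_succ_iff_lt_or_eq.1 hi with h | rfl
    · exact ⟨0, by simpa using mem_Fil f x h r⟩
    · exact ⟨r, by simp⟩
  | zero => exact ⟨0, by simp⟩
  | add a b _ _ ha hb =>
    obtain ⟨r, hr⟩ := ha
    obtain ⟨s, hs⟩ := hb
    refine ⟨r + s, ?_⟩
    have := add_mem hr hs
    rw [map_add, mul_add]
    convert this using 1
    abel
  | neg a _ ha =>
    obtain ⟨r, hr⟩ := ha
    refine ⟨-r, ?_⟩
    have := neg_mem hr
    rw [map_neg, mul_neg]
    convert this using 1
    abel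

theorem Fil_mul_right {n : ℕ} {y : S} (hy : y ∈ Fil f x n) (r : R) : y * f r ∈ Fil f x n := by
  refine Fil_induct f x _ (AddMonoidHom.mulRight (f r)) ?_ hy
  intro i hi s
  have := mem_Fil f x hi (s * r)
  simpa [mul_assoc] using this

theorem Fil_x_mul {n : ℕ} {y : S} (hy : y ∈ Fil f x n) : x * y ∈ Fil f x (n + 1) := by
  refine Fil_induct f x _ (AddMonoidHom.mulLeft x) ?_ hy
  intro i hi s
  have := mem_Fil f x (Nat.succ_lt_succ hi) s
  simpa [mul_assoc, pow_succ'] using this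

variable (h2 : ∀ r, ∃ r' r'', f r * x = x * f r' + f r'')
include h2

theorem Fil_mul_x {n : ℕ} {y : S} (hy : y ∈ Fil f x n) : y * x ∈ Fil f x (n + 1) := by
  refine Fil_induct f x _ (AddMonoidHom.mulRight x) ?_ hy
  intro i hi s
  obtain ⟨r', r'', h⟩ := h2 s
  have e : x ^ i * f s * x = x ^ (i + 1) * f r' + x ^ i * f r'' := by
    rw [mul_assoc, h, mul_add, pow_succ, mul_assoc]
  simp only [AddMonoidHom.mulRight_apply, e]
  exact add_mem (mem_Fil f x (by omega) _) (mem_Fil f x (by omega) _)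

theorem left_pow (n : ℕ) : ∀ r, ∃ r', f r * x ^ n - x ^ n * f r' ∈ Fil f x n := by
  induction n with
  | zero => intro r; exact ⟨r, by simp⟩
  | succ n ih =>
    intro r
    obtain ⟨r1, r2, h⟩ := h2 r
    obtain ⟨s1, hs1⟩ := ih r1
    obtain ⟨s2, hs2⟩ := ih r2
    refine ⟨s1, ?_⟩
    have e : f r * x ^ (n + 1) - x ^ (n + 1) * f s1 =
        x * (f r1 * x ^ n - x ^ n * f s1) + ((f r2 * x ^ n - x ^ n * f s2) + x ^ n * f s2) := by
      rw [pow_succ', ← mul_assoc, h]; noncomm_ring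
    rw [e]
    exact add_mem (Fil_x_mul f x hs1) (add_mem (Fil_mono f x (by omega) hs2)
      (mem_Fil f x (by omega) _))

theorem Fil_mul_left {n : ℕ} {y : S} (hy : y ∈ Fil f x n) (r : R) : f r * y ∈ Fil f x n := by
  refine Fil_induct f x _ (AddMonoidHom.mulLeft (f r)) ?_ hy
  intro i hi s
  obtain ⟨r', h⟩ := left_pow f x h2 i r
  have e : f r * (x ^ i * f s) = (f r * x ^ i - x ^ i * f r') * f s + x ^ i * f (r' * s) := by
    rw [map_mul]; noncomm_ring
  simp only [AddMonoidHom.coe_mulLeft, e]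
  exact add_mem (Fil_mono f x hi.le (Fil_mul_right f x h _)) (mem_Fil f x hi _)

variable (h1 : ∀ r, ∃ r' r'', x * f r = f r' * x + f r'')
include h1

theorem right_pow (n : ℕ) : ∀ r, ∃ r', f r' * x ^ n - x ^ n * f r ∈ Fil f x n := by
  induction n with
  | zero => intro r; exact ⟨r, by simp⟩
  | succ n ih =>
    intro r
    obtain ⟨r1, r2, h⟩ := h1 r
    obtain ⟨s1, hs1⟩ := ih r1
    refine ⟨s1, ?_⟩
    have e : f s1 * x ^ (n + 1) - x ^ (n + 1) * f r =
        (f s1 * x ^ n - x ^ n * f r1) * x - x ^ n * f r2 := by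
      rw [pow_succ, mul_assoc _ x, h]; noncomm_ring
    rw [e]
    exact sub_mem (Fil_mul_x f x h2 hs1) (mem_Fil f x (by omega) _)

/-- The left ideal of leading coefficients in degree `n`. -/
def J (n : ℕ) (I : Ideal S) : Ideal R where
  carrier := {r | ∃ y ∈ I, y - x ^ n * f r ∈ Fil f x n}
  zero_mem' := ⟨0, I.zero_mem, by simp⟩
  add_mem' := by
    rintro a b ⟨y, hy, ha⟩ ⟨z, hz, hb⟩
    refine ⟨y + z, I.add_mem hy hz, ?_⟩
    rw [map_add, mul_add, add_sub_add_comm]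
    exact add_mem ha hb
  smul_mem' := by
    rintro s r ⟨y, hy, ha⟩
    obtain ⟨s', hs⟩ := right_pow f x h2 h1 n s
    refine ⟨f s' * y, I.mul_mem_left _ hy, ?_⟩
    have e : f s' * y - x ^ n * f (s • r) =
        f s' * (y - x ^ n * f r) + (f s' * x ^ n - x ^ n * f s) * f r := by
      rw [smul_eq_mul, map_mul]; noncomm_ring
    rw [e]
    exact add_mem (Fil_mul_left f x h2 ha _) (Fil_mul_right f x hs _)

theorem J_mono {n : ℕ} {I I' : Ideal S} (h : I ≤ I') :
    J f x h2 h1 n I ≤ J f x h2 h1 n I' := by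
  rintro r ⟨y, hy, hr⟩
  exact ⟨y, h hy, hr⟩

theorem J_step (n : ℕ) (I : Ideal S) : J f x h2 h1 n I ≤ J f x h2 h1 (n + 1) I := by
  rintro r ⟨y, hy, hr⟩
  refine ⟨x * y, I.mul_mem_left _ hy, ?_⟩
  have := Fil_x_mul f x hr
  rw [mul_sub, ← mul_assoc, ← pow_succ'] at this
  exact this

theorem J_monotone (I : Ideal S) : Monotone (fun n => J f x h2 h1 n I) :=
  monotone_nat_of_le_succ fun n => J_step f x h2 h1 n I

theorem exists_G [IsNoetherianRing R] (n : ℕ) (I : Ideal S) :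
    ∃ G : Ideal S, G.FG ∧ G ≤ I ∧ J f x h2 h1 n I ≤ J f x h2 h1 n G := by
  classical
  obtain ⟨t, ht⟩ := (J f x h2 h1 n I).fg_of_isNoetherianRing
  have hmem : ∀ r : R, r ∈ t → ∃ y ∈ I, y - x ^ n * f r ∈ Fil f x n := by
    intro r hr
    have : r ∈ J f x h2 h1 n I := by rw [← ht]; exact Submodule.subset_span hr
    exact this
  choose! y hyI hy using hmem
  refine ⟨Ideal.span (t.image y : Finset S), ⟨_, rfl⟩, ?_, ?_⟩
  · rw [Ideal.span_le]
    intro z hz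
    obtain ⟨r, hr, rfl⟩ := Finset.mem_image.1 hz
    exact hyI r hr
  · conv_lhs => rw [← ht]
    rw [Submodule.span_le]
    intro r hr
    exact ⟨y r, Ideal.subset_span (Finset.mem_coe.2 (Finset.mem_image_of_mem y hr)), hy r hr⟩

theorem le_of_J {I G : Ideal S} (hG : G ≤ I)
    (h : ∀ n, J f x h2 h1 n I ≤ J f x h2 h1 n G) (n : ℕ) :
    ∀ y ∈ I, y ∈ Fil f x n → y ∈ G := by
  induction n with
  | zero => intro y _ hy; rw [Fil_zero f x hy]; exact G.zero_mem
  | succ n ih =>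
    intro y hyI hy
    obtain ⟨r, hr⟩ := Fil_succ f x hy
    obtain ⟨z, hz, hzr⟩ := h n ⟨y, hyI, hr⟩
    have h3 : y - z ∈ G := by
      apply ih _ (I.sub_mem hyI (hG hz))
      have := sub_mem hr hzr
      simpa using this
    simpa using G.add_mem h3 hz

theorem base [IsNoetherianRing R] (hgen : Subring.closure (insert x (Set.range f)) = ⊤) :
    IsNoetherianRing S := by
  have hall : ∀ s : S, ∃ n, s ∈ Fil f x n := by
    -- the set of multipliers preserving the union of the filtration
    have key : ∀ s : S, s ∈ Subring.closure (insert x (Set.range f)) →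
        ∀ n, ∀ y ∈ Fil f x n, ∃ m, s * y ∈ Fil f x m := by
      intro s hs
      induction hs using Subring.closure_induction with
      | mem s h =>
        intro n y hy
        rcases h with rfl | ⟨r, rfl⟩
        · exact ⟨_, Fil_x_mul f _ hy⟩
        · exact ⟨_, Fil_mul_left f x h2 hy r⟩
      | zero => intro n y hy; exact ⟨0, by simp⟩
      | one => intro n y hy; exact ⟨n, by simpa⟩
      | add a b _ _ ha hb =>
        intro n y hy
        obtain ⟨m, hm⟩ := ha n y hy
        obtain ⟨k, hk⟩ := hb n y hy
        refine ⟨max m k, ?_⟩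
        rw [add_mul]
        exact add_mem (Fil_mono f x (le_max_left _ _) hm) (Fil_mono f x (le_max_right _ _) hk)
      | neg a _ ha =>
        intro n y hy
        obtain ⟨m, hm⟩ := ha n y hy
        exact ⟨m, by rw [neg_mul]; exact neg_mem hm⟩
      | mul a b _ _ ha hb =>
        intro n y hy
        obtain ⟨m, hm⟩ := hb n y hy
        obtain ⟨k, hk⟩ := ha m _ hm
        exact ⟨k, by rwa [mul_assoc]⟩
    intro s
    have := key s (by rw [hgen]; trivial) 1 1 (by simpa using mem_Fil f x (Nat.zero_lt_one) 1)
    simpa using this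
  rw [isNoetherianRing_iff_ideal_fg]
  intro I
  choose G hfg hle hJ using fun n => exists_G f x h2 h1 n I
  obtain ⟨N, hN⟩ := monotone_stabilizes_iff_noetherian.2
    (inferInstance : IsNoetherian R R) ⟨_, J_monotone f x h2 h1 I⟩
  let G' : Ideal S := ⨆ n ∈ Finset.range (N + 1), G n
  have hG' : G'.FG := Submodule.fg_biSup _ _ fun n _ => hfg n
  have hle' : G' ≤ I := iSup₂_le fun n _ => hle n
  have hs : ∀ n ≤ N, J f x h2 h1 n I ≤ J f x h2 h1 n G' := fun n hn =>
    (hJ n).trans (J_mono f x h2 h1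
      (le_iSup₂_of_le (f := fun n (_ : n ∈ Finset.range (N + 1)) => G n) n
        (Finset.mem_range.2 (by omega)) le_rfl))
  have hall' : ∀ n, J f x h2 h1 n I ≤ J f x h2 h1 n G' := by
    intro n
    rcases le_total n N with h | h
    · exact hs n h
    · have e : J f x h2 h1 N I = J f x h2 h1 n I := hN n h
      rw [← e]
      exact (hs N le_rfl).trans (J_monotone f x h2 h1 G' h)
  have : I = G' := by
    apply le_antisymm _ hle'
    intro y hy
    obtain ⟨n, hn⟩ := hall y
    exact le_of_J f x h2 h1 hle' hall' n y hy hn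
  rw [this]
  exact hG'

end Base

section Step

variable {S : Type*} [Ring S]

/-- `x r ∈ B x + B`. -/
def NL (B : Subring S) (x r : S) : Prop := ∃ p ∈ B, ∃ q ∈ B, x * r = p * x + q

/-- `r x ∈ x B + B`. -/
def NR (B : Subring S) (x r : S) : Prop := ∃ p ∈ B, ∃ q ∈ B, r * x = x * p + q

/-- Adjoin an element. -/
def Adj (B : Subring S) (x : S) : Subring S := Subring.closure (insert x (B : Set S))

theorem le_Adj (B : Subring S) (x : S) : B ≤ Adj B x :=
  fun _ h => Subring.subset_closure (Set.mem_insert_of_mem _ h)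

theorem self_mem_Adj (B : Subring S) (x : S) : x ∈ Adj B x :=
  Subring.subset_closure (Set.mem_insert _ _)

theorem step (B : Subring S) (x : S) (hB : IsNoetherianRing B)
    (h1 : ∀ r ∈ B, NL B x r) (h2 : ∀ r ∈ B, NR B x r) : IsNoetherianRing (Adj B x) := by
  refine base (Subring.inclusion (le_Adj B x)) ⟨x, self_mem_Adj B x⟩ ?_ ?_ ?_
  · rintro ⟨r, hr⟩
    obtain ⟨r', hr', r'', hr'', e⟩ := h2 r hr
    exact ⟨⟨r', hr'⟩, ⟨r'', hr''⟩, Subtype.ext e⟩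
  · rintro ⟨r, hr⟩
    obtain ⟨r', hr', r'', hr'', e⟩ := h1 r hr
    exact ⟨⟨r', hr'⟩, ⟨r'', hr''⟩, Subtype.ext e⟩
  · rw [eq_top_iff]
    rintro ⟨y, hy⟩ -
    have hle : Adj B x ≤ (Subring.closure (insert (⟨x, self_mem_Adj B x⟩ : Adj B x)
        (Set.range (Subring.inclusion (le_Adj B x))))).map (Adj B x).subtype := by
      refine Subring.closure_le.2 ?_
      rintro z (rfl | hz)
      · exact ⟨_, Subring.subset_closure (Set.mem_insert _ _), rfl⟩
      · exact ⟨_, Subring.subset_closure (Set.mem_insert_of_mem _ ⟨⟨z, hz⟩, rfl⟩), rfl⟩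
    obtain ⟨w, hw, e⟩ := hle hy
    have e' : w = ⟨y, hy⟩ := Subtype.ext e
    exact e' ▸ hw

theorem NL_Adj {B C : Subring S} {x z : S} (hC : Adj B z ≤ C) (h : ∀ r ∈ B, NL C x r)
    (hz : NL C x z) : ∀ r ∈ Adj B z, NL C x r := by
  intro r hr
  unfold Adj at hr
  induction hr using Subring.closure_induction with
  | mem s hs =>
    rcases hs with rfl | hs
    · exact hz
    · exact h s hs
  | zero => exact ⟨0, zero_mem _, 0, zero_mem _, by simp⟩
  | one => exact ⟨1, one_mem _, 0, zero_mem _, by simp⟩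
  | add s t hs ht ihs iht =>
    obtain ⟨a, ha, b, hb, e⟩ := ihs
    obtain ⟨a', ha', b', hb', e'⟩ := iht
    exact ⟨a + a', add_mem ha ha', b + b', add_mem hb hb', by rw [mul_add, e, e']; noncomm_ring⟩
  | neg s hs ihs =>
    obtain ⟨a, ha, b, hb, e⟩ := ihs
    exact ⟨-a, neg_mem ha, -b, neg_mem hb, by rw [mul_neg, e]; noncomm_ring⟩
  | mul s t hs ht ihs iht =>
    obtain ⟨a, ha, b, hb, e⟩ := ihs
    obtain ⟨a', ha', b', hb', e'⟩ := iht
    exact ⟨a * a', mul_mem ha ha', a * b' + b * t, add_mem (mul_mem ha hb') (mul_mem hb (hC ht)), by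
      rw [← mul_assoc, e, add_mul, mul_assoc a, e']; noncomm_ring⟩

theorem NR_Adj {B C : Subring S} {x z : S} (hC : Adj B z ≤ C) (h : ∀ r ∈ B, NR C x r)
    (hz : NR C x z) : ∀ r ∈ Adj B z, NR C x r := by
  intro r hr
  unfold Adj at hr
  induction hr using Subring.closure_induction with
  | mem s hs =>
    rcases hs with rfl | hs
    · exact hz
    · exact h s hs
  | zero => exact ⟨0, zero_mem _, 0, zero_mem _, by simp⟩
  | one => exact ⟨1, one_mem _, 0, zero_mem _, by simp⟩
  | add s t hs ht ihs iht =>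
    obtain ⟨a, ha, b, hb, e⟩ := ihs
    obtain ⟨a', ha', b', hb', e'⟩ := iht
    exact ⟨a + a', add_mem ha ha', b + b', add_mem hb hb', by rw [add_mul, e, e']; noncomm_ring⟩
  | neg s hs ihs =>
    obtain ⟨a, ha, b, hb, e⟩ := ihs
    exact ⟨-a, neg_mem ha, -b, neg_mem hb, by rw [neg_mul, e]; noncomm_ring⟩
  | mul s t hs ht ihs iht =>
    obtain ⟨a, ha, b, hb, e⟩ := ihs
    obtain ⟨a', ha', b', hb', e'⟩ := iht
    exact ⟨a * a', mul_mem ha ha', b * a' + s * b', add_mem (mul_mem hb ha') (mul_mem (hC hs) hb'),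
      by rw [mul_assoc, e', mul_add, ← mul_assoc s, e]; noncomm_ring⟩

theorem main {P : Type*} [CommRing P] [IsNoetherianRing P] [Algebra P S] (u d : S)
    (a b b' c : P) (hb : b' * b = 1)
    (ddu : d * d * u = a • (d * u * d) + b • (u * d * d) + c • d)
    (duu : d * u * u = a • (u * d * u) + b • (u * u * d) + c • u)
    (hgen : Algebra.adjoin P {u, d} = ⊤) : IsNoetherianRing S := by
  let B0 : Subring S := (algebraMap P S).range
  let B1 := Adj B0 (u * d)
  let B2 := Adj B1 (d * u)
  let B3 := Adj B2 d
  let B4 := Adj B3 u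
  have h01 : B0 ≤ B1 := le_Adj _ _
  have h12 : B1 ≤ B2 := le_Adj _ _
  have h23 : B2 ≤ B3 := le_Adj _ _
  have h34 : B3 ≤ B4 := le_Adj _ _
  have c0 : ∀ C : Subring S, B0 ≤ C → ∀ z, ∀ r ∈ B0, NL C z r := by
    rintro C hC z _ ⟨p, rfl⟩
    exact ⟨algebraMap P S p, hC ⟨p, rfl⟩, 0, zero_mem _, by simp [Algebra.commutes]⟩
  have c0' : ∀ C : Subring S, B0 ≤ C → ∀ z, ∀ r ∈ B0, NR C z r := by
    rintro C hC z _ ⟨p, rfl⟩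
    exact ⟨algebraMap P S p, hC ⟨p, rfl⟩, 0, zero_mem _, by simp [Algebra.commutes]⟩
  have hx1 : u * d ∈ B1 := self_mem_Adj _ _
  have hx2 : u * d ∈ B2 := h12 hx1
  have hy2 : d * u ∈ B2 := self_mem_Adj _ _
  have hp2 : ∀ p, algebraMap P S p ∈ B2 := fun p => h12 (h01 ⟨p, rfl⟩)
  have hsm : ∀ (p : P), ∀ z ∈ B2, p • z ∈ B2 := by
    intro p z hz
    rw [Algebra.smul_def]
    exact mul_mem (hp2 p) hz
  have hxy : (d * u) * (u * d) = (u * d) * (d * u) := by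
    have e1 : (d * u) * (u * d) = (d * u * u) * d := by noncomm_ring
    have e2 : (u * d) * (d * u) = u * (d * d * u) := by noncomm_ring
    rw [e1, e2, ddu, duu]
    simp only [add_mul, mul_add, smul_mul_assoc, mul_smul_comm, mul_assoc]
  have hbb : ∀ z : S, b' • b • z = z := fun z => by rw [smul_smul, hb, one_smul]
  have n0 : IsNoetherianRing B0 :=
    isNoetherianRing_of_surjective P B0 (algebraMap P S).rangeRestrict
      (algebraMap P S).rangeRestrict_surjective
  have n1 : IsNoetherianRing B1 := step _ _ n0 (c0 _ le_rfl _) (c0' _ le_rfl _)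
  have n2 : IsNoetherianRing B2 := by
    refine step _ _ n1 (NL_Adj le_rfl (c0 _ h01 _) ?_) (NR_Adj le_rfl (c0' _ h01 _) ?_)
    · exact ⟨u * d, hx1, 0, zero_mem _, by rw [hxy, add_zero]⟩
    · exact ⟨u * d, hx1, 0, zero_mem _, by rw [hxy, add_zero]⟩
  have hw : a • (d * u) + b • (u * d) + algebraMap P S c ∈ B2 :=
    add_mem (add_mem (hsm _ _ hy2) (hsm _ _ hx2)) (hp2 c)
  have hv : b' • (d * u - a • (u * d) - algebraMap P S c) ∈ B2 :=
    hsm _ _ (sub_mem (sub_mem hy2 (hsm _ _ hx2)) (hp2 c))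
  have h02 := h01.trans h12
  have n3 : IsNoetherianRing B3 := by
    refine step _ _ n2 (NL_Adj le_rfl (NL_Adj h12 (c0 _ h02 _) ?_) ?_)
      (NR_Adj le_rfl (NR_Adj h12 (c0' _ h02 _) ?_) ?_)
    · exact ⟨d * u, hy2, 0, zero_mem _, by noncomm_ring⟩
    · refine ⟨_, hw, 0, zero_mem _, ?_⟩
      rw [← mul_assoc, ddu, add_mul, add_mul, smul_mul_assoc, smul_mul_assoc, add_zero,
        ← Algebra.smul_def]
    · refine ⟨_, hv, 0, zero_mem _, ?_⟩
      rw [add_zero, mul_smul_comm, mul_sub, mul_sub, ← mul_assoc, ddu, mul_smul_comm,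
        ← Algebra.commutes, ← Algebra.smul_def, ← mul_assoc]
      conv_lhs => rw [← hbb (u * d * d)]
      congr 1
      abel
    · exact ⟨u * d, hx2, 0, zero_mem _, by noncomm_ring⟩
  have n4 : IsNoetherianRing B4 := by
    refine step _ _ n3
      (NL_Adj le_rfl (NL_Adj h23 (NL_Adj (h12.trans h23) (c0 _ (h02.trans h23) _) ?_) ?_) ?_)
      (NR_Adj le_rfl (NR_Adj h23 (NR_Adj (h12.trans h23) (c0' _ (h02.trans h23) _) ?_) ?_) ?_)
    · refine ⟨_, h23 hv, 0, zero_mem _, ?_⟩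
      rw [add_zero, smul_mul_assoc, sub_mul, sub_mul, duu, smul_mul_assoc, ← Algebra.smul_def,
        ← mul_assoc]
      conv_lhs => rw [← hbb (u * u * d)]
      congr 1
      abel
    · exact ⟨u * d, h23 hx2, 0, zero_mem _, by noncomm_ring⟩
    · exact ⟨0, zero_mem _, u * d, h23 hx2, by simp⟩
    · exact ⟨d * u, h23 hy2, 0, zero_mem _, by noncomm_ring⟩
    · refine ⟨_, h23 hw, 0, zero_mem _, ?_⟩
      rw [duu, mul_add, mul_add, mul_smul_comm, mul_smul_comm, add_zero, ← Algebra.commutes,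
        ← Algebra.smul_def, mul_assoc, mul_assoc]
    · exact ⟨0, zero_mem _, d * u, h23 hy2, by simp⟩
  have htop : ∀ s : S, s ∈ B4 := by
    intro s
    have hs : s ∈ Algebra.adjoin P {u, d} := by rw [hgen]; trivial
    induction hs using Algebra.adjoin_induction with
    | mem z hz =>
      rcases hz with rfl | rfl
      · exact self_mem_Adj _ _
      · exact h34 (self_mem_Adj _ _)
    | algebraMap p => exact h34 (h23 (hp2 p))
    | add _ _ _ _ h h' => exact add_mem h h'
    | mul _ _ _ _ h h' => exact mul_mem h h'
  exact isNoetherianRing_of_surjective B4 S B4.subtype fun s => ⟨⟨s, htop s⟩, rfl⟩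

end Step

end DownUpAux

open DownUp in
/-- If β ≠ 0, the down-up algebra A(α,β,φ) over K[t₁,…,tₙ] is left and right
noetherian. -/
theorem downUp_noetherian {K : Type} [Field K] {n : ℕ}
    (α β : K) (hβ : β ≠ 0) (φ : MvPolynomial (Fin n) K) :
    IsNoetherianRing (A α β φ) ∧ IsNoetherianRing (A α β φ)ᵐᵒᵖ := by
  let π := RingQuot.mkAlgHom (MvPolynomial (Fin n) K) (Rel α β φ)
  have hb : (C β⁻¹ : MvPolynomial (Fin n) K) * C β = 1 := by
    rw [← C_mul, inv_mul_cancel₀ hβ, C_1]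
  have hC : ∀ (k : K) (z : F K n), k • z = (C k : MvPolynomial (Fin n) K) • z := by
    intro k z
    rw [← algebraMap_smul (MvPolynomial (Fin n) K) k z, MvPolynomial.algebraMap_eq]
  have ddu := RingQuot.mkAlgHom_rel (MvPolynomial (Fin n) K) (Rel.ddu (α := α) (β := β) (φ := φ))
  have duu := RingQuot.mkAlgHom_rel (MvPolynomial (Fin n) K) (Rel.duu (α := α) (β := β) (φ := φ))
  rw [← Algebra.commutes] at duu
  simp only [hC, ← Algebra.smul_def, map_add, map_smul, map_mul] at ddu duu
  have hgen : Algebra.adjoin (MvPolynomial (Fin n) K) {π uF, π dF} = ⊤ := by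
    have h1 : Algebra.adjoin (MvPolynomial (Fin n) K) ({uF, dF} : Set (F K n)) = ⊤ := by
      rw [← FreeAlgebra.adjoin_range_ι]
      congr 1
      ext z
      constructor
      · rintro (rfl | rfl)
        · exact ⟨Gen.u, rfl⟩
        · exact ⟨Gen.d, rfl⟩
      · rintro ⟨_ | _, rfl⟩
        · exact Or.inl rfl
        · exact Or.inr rfl
    have h2 := congrArg (Subalgebra.map π) h1
    rw [AlgHom.map_adjoin, Set.image_pair, Algebra.map_top,
      (AlgHom.range_eq_top π).2 (RingQuot.mkAlgHom_surjective _ _)] at h2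
    exact h2
  refine ⟨DownUpAux.main (π uF) (π dF) (C α) (C β) (C β⁻¹) φ hb ddu duu hgen, ?_⟩
  refine DownUpAux.main (MulOpposite.op (π dF)) (MulOpposite.op (π uF)) (C α) (C β) (C β⁻¹) φ hb
    ?_ ?_ ?_
  · apply MulOpposite.unop_injective
    simpa [mul_assoc] using duu
  · apply MulOpposite.unop_injective
    simpa [mul_assoc] using ddu
  · have h3 := congrArg Subalgebra.op hgen
    rw [Subalgebra.op_adjoin, Subalgebra.op_top] at h3
    rw [← h3]
    congr 1
    ext z
    constructor
    · rintro (rfl | rfl)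
      · exact Or.inr rfl
      · exact Or.inl rfl
    · rintro (h | h)
      · exact Or.inr (MulOpposite.unop_injective h)
      · exact Or.inl (MulOpposite.unop_injective h)
end

section
/- If β ≠ 0, then every invertible element of the down-up algebra A(α,β,φ) over K[t₁,…,tₙ] is a nonzero scalar in K. -/
open MvPolynomial

namespace SkewMonoidAlgebra.DownUpAux

abbrev G := Multiplicative ℤ

/-- degree-k homogeneous element of the skew Laurent ring -/
theorem skew_coeff_mul_unique {B : Type} [CommRing B] [MulSemiringAction G B]
    (x y : SkewMonoidAlgebra B G) (p q : G)
    (hu : UniqueMul x.support y.support p q) :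
    (x * y).coeff (p * q) = x.coeff p * (p • y.coeff q) := by
  classical
  have hx : (x * y).coeff (p * q) =
      ∑ a ∈ x.support, ∑ b ∈ y.support, (if a * b = p * q then x.coeff a * (a • y.coeff b) else 0) := by
    rw [coeff_mul]
    rfl
  rw [hx]
  rw [Finset.sum_eq_single p, Finset.sum_eq_single q]
  · simp
  · intro b hb hbq
    rw [if_neg]
    intro h
    exact hbq (mul_left_cancel h)
  · intro hq
    simp [notMem_support_iff.1 hq]
  · intro a ha hap
    refine Finset.sum_eq_zero fun b hb => ?_
    rw [if_neg]
    intro h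
    exact hap (hu ha hb h).1
  · intro hp
    simp [notMem_support_iff.1 hp]

theorem skew_unit {B : Type} [CommRing B] [IsDomain B] [MulSemiringAction G B]
    (x y : SkewMonoidAlgebra B G) (hxy : x * y = 1) :
    ∃ (g : G) (b c : B), IsUnit b ∧ IsUnit c ∧ x = single g b ∧ y = single g⁻¹ c := by
  classical
  have hx0 : x ≠ 0 := by rintro rfl; simp at hxy
  have hy0 : y ≠ 0 := by rintro rfl; simp at hxy
  have hxs : 0 < x.support.card := by
    rw [Finset.card_pos, Finset.nonempty_iff_ne_empty]; simpa using hx0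
  have hys : 0 < y.support.card := by
    rw [Finset.card_pos, Finset.nonempty_iff_ne_empty]; simpa using hy0
  have key : ∀ p ∈ x.support ×ˢ y.support, UniqueMul x.support y.support p.1 p.2 →
      p.1 * p.2 = 1 := by
    intro p hp hu
    rw [Finset.mem_product] at hp
    by_contra hne
    have := skew_coeff_mul_unique x y p.1 p.2 hu
    rw [hxy, coeff_one, Finsupp.single_eq_of_ne (by simpa using hne)] at this
    have h2 := mul_eq_zero.1 this.symm
    rcases h2 with h2 | h2
    · exact mem_support_iff.1 hp.1 h2
    · rw [smul_eq_zero_iff_eq] at h2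
      exact mem_support_iff.1 hp.2 h2
  have hcard : ¬ 1 < x.support.card * y.support.card := by
    intro hc
    obtain ⟨p, hp, q, hq, hne, hup, huq⟩ := TwoUniqueProds.uniqueMul_of_one_lt_card hc
    have h1 := key p hp hup
    have h2 := key q hq huq
    rw [Finset.mem_product] at hq
    have := hup hq.1 hq.2 (h2.trans h1.symm)
    exact hne (Prod.ext this.1.symm this.2.symm)
  have hpos := Nat.mul_pos hxs hys
  have h1 : x.support.card * y.support.card = 1 := by omega
  obtain ⟨g, hg⟩ := Finset.card_eq_one.1 (Nat.eq_one_of_mul_eq_one_right h1)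
  obtain ⟨g', hg'⟩ := Finset.card_eq_one.1 (Nat.eq_one_of_mul_eq_one_left h1)
  have hxe : x = single g (x.coeff g) := by
    ext a
    by_cases h : a = g
    · subst h; simp
    · rw [coeff_single, Finsupp.single_eq_of_ne h, ← notMem_support_iff, hg]; simpa using h
  have hye : y = single g' (y.coeff g') := by
    ext a
    by_cases h : a = g'
    · subst h; simp
    · rw [coeff_single, Finsupp.single_eq_of_ne h, ← notMem_support_iff, hg']; simpa using h
  have hum : UniqueMul x.support y.support g g' := by
    rw [hg, hg']; intro a b ha hb _; exact ⟨by simpa using ha, by simpa using hb⟩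
  have hgg : g * g' = 1 := key (g, g') (by simp [hg, hg']) hum
  have hco := skew_coeff_mul_unique x y g g' hum
  rw [hxy, hgg, coeff_one, Finsupp.single_eq_same] at hco
  refine ⟨g, x.coeff g, y.coeff g', IsUnit.of_mul_eq_one _ hco.symm, ?_, hxe, ?_⟩
  · have : IsUnit (g • y.coeff g') := IsUnit.of_mul_eq_one _ ((mul_comm _ _).trans hco.symm)
    simpa using this.map (MulSemiringAction.toRingHom G B g⁻¹)
  · rw [← eq_inv_of_mul_eq_one_right hgg]; exact hye

/-- The PBW-type elements. -/
def w {A : Type} [Ring A] (u d : A) : ℤ → A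
  | Int.ofNat k => d ^ k
  | Int.negSucc k => u ^ (k + 1)

theorem w_nat {A : Type} [Ring A] (u d : A) (k : ℕ) : w u d (k : ℤ) = d ^ k := rfl

theorem w_neg {A : Type} [Ring A] (u d : A) (k : ℕ) : w u d (-(k : ℤ)) = u ^ k := by
  cases k with
  | zero => simpa using w_nat u d 0
  | succ k => rfl

noncomputable def Psi {A B : Type} [Ring A] [CommRing B] (ι : B →+* A) (u d : A) :
    (ℤ →₀ B) →+ A :=
  Finsupp.liftAddHom fun k => (AddMonoidHom.mulRight (w u d k)).comp ι.toAddMonoidHom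

theorem Psi_single {A B : Type} [Ring A] [CommRing B] (ι : B →+* A) (u d : A) (k : ℤ) (b : B) :
    Psi ι u d (Finsupp.single k b) = ι b * w u d k := by
  simp [Psi]

theorem Psi_surj {A B : Type} [Ring A] [CommRing B] (σ τ : B → B) (ι : B →+* A) (u d : A) (h k : B)
    (hd : ∀ b, d * ι b = ι (σ b) * d) (hu : ∀ b, u * ι b = ι (τ b) * u)
    (hud : u * d = ι h) (hdu : d * u = ι k)
    (hgen : ∀ S : AddSubgroup A, (1 ∈ S) → (∀ b, ∀ x ∈ S, ι b * x ∈ S) →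
      (∀ x ∈ S, d * x ∈ S) → (∀ x ∈ S, u * x ∈ S) → S = ⊤) (a : A) :
    ∃ f, Psi ι u d f = a := by
  have hN : ∀ b (k : ℕ), ι b * d ^ k ∈ (Psi ι u d).range :=
    fun b k => ⟨Finsupp.single (k : ℤ) b, by rw [Psi_single, w_nat]⟩
  have hM : ∀ b (k : ℕ), ι b * u ^ k ∈ (Psi ι u d).range :=
    fun b k => ⟨Finsupp.single (-(k : ℤ)) b, by rw [Psi_single, w_neg]⟩
  have hmul : ∀ y : A, (∀ b (k : ℕ), y * (ι b * d ^ k) ∈ (Psi ι u d).range) →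
      (∀ b (k : ℕ), y * (ι b * u ^ k) ∈ (Psi ι u d).range) →
      ∀ x ∈ (Psi ι u d).range, y * x ∈ (Psi ι u d).range := by
    rintro y h1 h2 _ ⟨f, rfl⟩
    induction f using Finsupp.induction_linear with
    | zero => simp
    | add f g hf hg => rw [map_add, mul_add]; exact add_mem hf hg
    | single k b =>
      rw [Psi_single]
      cases k with
      | ofNat k => exact h1 b k
      | negSucc k => exact h2 b (k + 1)
  have : (Psi ι u d).range = ⊤ := by
    apply hgen
    · simpa using hN 1 0
    · intro b
      apply hmul
      · intro c k; rw [← mul_assoc, ← map_mul]; exact hN _ _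
      · intro c k; rw [← mul_assoc, ← map_mul]; exact hM _ _
    · apply hmul
      · intro c k; rw [← mul_assoc, hd, mul_assoc, ← pow_succ']; exact hN _ _
      · intro c j
        rw [← mul_assoc, hd]
        cases j with
        | zero => simpa using hN (σ c) 1
        | succ j =>
          rw [pow_succ', mul_assoc, ← mul_assoc d, hdu, ← mul_assoc, ← map_mul]; exact hM _ _
    · apply hmul
      · intro c j
        rw [← mul_assoc, hu]
        cases j with
        | zero => simpa using hM (τ c) 1
        | succ j =>
          rw [pow_succ', mul_assoc, ← mul_assoc u, hud, ← mul_assoc, ← map_mul]; exact hN _ _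
      · intro c k; rw [← mul_assoc, hu, mul_assoc, ← pow_succ']; exact hM _ _
  have : a ∈ (Psi ι u d).range := this ▸ AddSubgroup.mem_top a
  exact this

theorem abstract_units {A B : Type} [Ring A] [CommRing B] [IsDomain B] [MulSemiringAction G B]
    (ι : B →+* A) (u d : A) (h : B) (hh0 : h ≠ 0) (hh : ¬ IsUnit h)
    (hsurj : ∀ a, ∃ f, Psi ι u d f = a)
    (Φ : A →+* SkewMonoidAlgebra B G)
    (hι : ∀ b, Φ (ι b) = single 1 b)
    (hd : Φ d = single (Multiplicative.ofAdd 1) 1)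
    (hu : Φ u = single (Multiplicative.ofAdd (-1)) h)
    (a : A) (ha : IsUnit a) : ∃ b, IsUnit b ∧ a = ι b := by
  have hdk : ∀ k : ℕ, Φ (d ^ k) = single (Multiplicative.ofAdd (k : ℤ)) 1 := by
    intro k
    induction k with
    | zero => simp
    | succ k ih =>
      rw [pow_succ, map_mul, ih, hd, single_mul_single, ← ofAdd_add]; simp
  have huk : ∀ k : ℕ, ∃ c, c ≠ 0 ∧ Φ (u ^ (k + 1)) =
      single (Multiplicative.ofAdd (Int.negSucc k)) (h * c) := by
    intro k
    induction k with
    | zero => exact ⟨1, one_ne_zero, by simpa using hu⟩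
    | succ k ih =>
      obtain ⟨c, hc, e⟩ := ih
      refine ⟨Multiplicative.ofAdd (-1 : ℤ) • (h * c), ?_, ?_⟩
      · rw [Ne, smul_eq_zero_iff_eq]; exact mul_ne_zero hh0 hc
      · rw [pow_succ', map_mul, e, hu, single_mul_single, ← ofAdd_add]
        congr 2
        rw [Int.negSucc_eq, Int.negSucc_eq]; push_cast; ring
  have hw : ∀ k : ℤ, ∃ c, c ≠ 0 ∧ (k < 0 → h ∣ c) ∧
      Φ (w u d k) = single (Multiplicative.ofAdd k) c := by
    rintro (k | k)
    · exact ⟨1, one_ne_zero, fun h => absurd h (by simp), hdk k⟩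
    · obtain ⟨c, hc, e⟩ := huk k
      exact ⟨h * c, mul_ne_zero hh0 hc, fun _ => dvd_mul_right _ _, e⟩
  choose c hc0 hch hcw using hw
  have hΨ : ∀ f k, (Φ (Psi ι u d f)).coeff (Multiplicative.ofAdd k) = f k * c k := by
    classical
    intro f k
    induction f using Finsupp.induction_linear with
    | zero => simp
    | add f g hf hg => simp [hf, hg, add_mul]
    | single j b =>
      rw [Psi_single, map_mul, hι, hcw, single_mul_single, one_smul, one_mul, coeff_single,
        Finsupp.single_apply, Finsupp.single_apply]
      by_cases hj : j = k
      · subst hj; simp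
      · simp [hj]
  have hinj : ∀ a a', Φ a = Φ a' → a = a' := by
    intro a a' haa
    obtain ⟨f, rfl⟩ := hsurj a
    obtain ⟨f', rfl⟩ := hsurj a'
    congr 1
    ext k
    apply mul_right_cancel₀ (hc0 k)
    rw [← hΨ, ← hΨ, haa]
  have hneg : ∀ a (k : ℤ) b, k < 0 → Φ a = single (Multiplicative.ofAdd k) b → ¬ IsUnit b := by
    intro a k b hk e hb
    obtain ⟨f, rfl⟩ := hsurj a
    have := hΨ f k
    rw [e, coeff_single, Finsupp.single_eq_same] at this
    exact hh (isUnit_of_dvd_unit ((hch k hk).trans (this ▸ dvd_mul_left _ _)) hb)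
  obtain ⟨a', ha'⟩ := ha.exists_right_inv
  obtain ⟨g, b, b', hb, hb', e, e'⟩ := skew_unit (Φ a) (Φ a') (by rw [← map_mul, ha', map_one])
  have h1 : ¬ Multiplicative.toAdd g < 0 := fun hk => hneg a _ b hk e hb
  have h2 : ¬ - Multiplicative.toAdd g < 0 := fun hk => hneg a' _ b' hk e' hb'
  have hg : g = 1 := by
    apply Multiplicative.toAdd.injective
    change Multiplicative.toAdd g = (0 : ℤ)
    omega
  refine ⟨b, hb, hinj _ _ ?_⟩
  rw [e, hg, hι]

end SkewMonoidAlgebra.DownUpAux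

namespace Polynomial.DownUpAux

open SkewMonoidAlgebra SkewMonoidAlgebra.DownUpAux

section poly
variable {R : Type} [CommRing R]

theorem biInd {P : R[X][X] → Prop} (hC : ∀ r, P (C (C r))) (hX : P (C X)) (hY : P X)
    (hadd : ∀ p q, P p → P q → P (p + q)) (hmul : ∀ p q, P p → P q → P (p * q)) (p : R[X][X]) :
    P p := by
  have hpow : ∀ p, P p → ∀ k : ℕ, P (p ^ k) := by
    intro p hp k
    induction k with
    | zero => simpa using hC 1
    | succ k ih => rw [pow_succ]; exact hmul _ _ ih hp
  have h1 : ∀ q : R[X], P (C q) := by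
    intro q
    induction q using Polynomial.induction_on' with
    | add p q hp hq => rw [C_add]; exact hadd _ _ hp hq
    | monomial k r =>
      rw [← C_mul_X_pow_eq_monomial, C_mul, C_pow]
      exact hmul _ _ (hC r) (hpow _ hX k)
  induction p using Polynomial.induction_on' with
  | add p q hp hq => exact hadd _ _ hp hq
  | monomial k r =>
    rw [← C_mul_X_pow_eq_monomial]
    exact hmul _ _ (h1 r) (hpow _ hY k)

/-- Evaluation of a two-variable polynomial at a commuting pair. -/
noncomputable def ev {A : Type} [Ring A] [Algebra R A] (x y : A) (hxy : Commute x y) :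
    R[X][X] →+* A :=
  eval₂RingHom' (aeval (R := R) x).toRingHom y (by
    intro q
    change Commute (aeval x q) y
    induction q using Polynomial.induction_on' with
    | add p q hp hq => rw [map_add]; exact hp.add_left hq
    | monomial k r =>
      rw [aeval_monomial]
      exact Commute.mul_left (Algebra.commutes r y) (hxy.pow_left k))

variable {A : Type} [Ring A] [Algebra R A] (x y : A) (hxy : Commute x y)

theorem ev_C (r : R) : ev x y hxy (C (C r)) = algebraMap R A r := by
  change eval₂ _ _ _ = _
  simp

theorem ev_X : ev (R := R) x y hxy (C X) = x := by
  change eval₂ _ _ _ = _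
  simp

theorem ev_Y : ev (R := R) x y hxy X = y := by
  change eval₂ _ _ _ = _
  simp

/-- Evaluation as an algebra hom. -/
noncomputable def evA {A : Type} [Ring A] [Algebra R A] (x y : A) (hxy : Commute x y) :
    R[X][X] →ₐ[R] A :=
  { ev x y hxy with commutes' := fun r => ev_C x y hxy r }

theorem evA_C (r : R) : evA x y hxy (C (C r)) = algebraMap R A r := ev_C _ _ hxy _
theorem evA_X : evA (R := R) x y hxy (C X) = x := ev_X _ _ hxy
theorem evA_Y : evA (R := R) x y hxy X = y := ev_Y _ _ hxy

theorem bi_ext {f g : R[X][X] →ₐ[R] A} (h1 : f (C X) = g (C X)) (h2 : f X = g X) : f = g := by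
  apply AlgHom.ext
  intro p
  induction p using biInd with
  | hC r => exact (f.commutes r).trans (g.commutes r).symm
  | hX => exact h1
  | hY => exact h2
  | hadd p q hp hq => rw [map_add, map_add, hp, hq]
  | hmul p q hp hq => rw [map_mul, map_mul, hp, hq]

noncomputable def sig (a b bi φ : R) (hb : b * bi = 1) : R[X][X] ≃ₐ[R] R[X][X] :=
  AlgEquiv.ofAlgHom
    (evA X (C (C a) * X + C (C b) * C X + C (C φ)) (Commute.all _ _))
    (evA (C (C bi) * (X - C (C a) * C X - C (C φ))) (C X) (Commute.all _ _))
    (by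
      have hb' : (C (C b) : R[X][X]) * C (C bi) = 1 := by rw [← C_mul, ← C_mul, hb]; simp
      apply bi_ext
      · rw [AlgHom.comp_apply, evA_X, map_mul, map_sub, map_sub, map_mul, evA_C, evA_C, evA_C, evA_X, evA_Y]
        change C (C bi) * (_ - C (C a) * _ - C (C φ)) = C X
        linear_combination C X * hb'
      · rw [AlgHom.comp_apply, evA_Y, evA_X]; rfl)
    (by
      have hb' : (C (C b) : R[X][X]) * C (C bi) = 1 := by rw [← C_mul, ← C_mul, hb]; simp
      apply bi_ext
      · rw [AlgHom.comp_apply, evA_X, evA_Y]; rfl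
      · rw [AlgHom.comp_apply, evA_Y, map_add, map_add, map_mul, map_mul, evA_C, evA_C, evA_C, evA_X, evA_Y]
        change C (C a) * C X + C (C b) * _ + C (C φ) = X
        linear_combination (X - C (C a) * C X - C (C φ)) * hb')

theorem sig_X (a b bi φ : R) (hb : b * bi = 1) : sig a b bi φ hb (C X) = X := evA_X _ _ (Commute.all _ _)
theorem sig_Y (a b bi φ : R) (hb : b * bi = 1) :
    sig a b bi φ hb X = C (C a) * X + C (C b) * C X + C (C φ) := evA_Y _ _ (Commute.all _ _)
theorem sig_C (a b bi φ : R) (hb : b * bi = 1) (r : R) :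
    sig a b bi φ hb (C (C r)) = C (C r) := evA_C _ _ (Commute.all _ _) _

end poly


section generic
variable {R : Type} [CommRing R] {A : Type} [Ring A] [Algebra R A]

/-- The relations of a down-up algebra. -/
structure IsDU (a b φ : R) (u d : A) : Prop where
  relD : d * (d * u) = algebraMap R A a * (d * u) * d + algebraMap R A b * (u * d) * d +
    algebraMap R A φ * d
  relU : d * u * u = algebraMap R A a * u * (d * u) + algebraMap R A b * u * (u * d) +
    u * algebraMap R A φ

theorem IsDU.comm {a b φ : R} {u d : A} (H : IsDU a b φ u d) : Commute (u * d) (d * u) := by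
  have c1 := Algebra.commutes a u
  have c2 := Algebra.commutes b u
  change _ * _ = _ * _
  calc _ = u * (d * (d * u)) := by simp only [mul_assoc]
    _ = (d * u * u) * d := by
      rw [H.relD, H.relU]
      simp only [mul_add, add_mul, ← mul_assoc, c1, c2]
      rw [mul_assoc u (algebraMap _ _ _) u, c2, ← mul_assoc]
    _ = _ := by simp only [mul_assoc]


theorem du_surj (a b bi φ : R) (hb : b * bi = 1) {u d : A} (H : IsDU a b φ u d)
    (hgen : ∀ S : AddSubgroup A, 1 ∈ S → (∀ r, ∀ x ∈ S, algebraMap R A r * x ∈ S) →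
      (∀ x ∈ S, d * x ∈ S) → (∀ x ∈ S, u * x ∈ S) → S = ⊤) (x : A) :
    ∃ f, Psi (ev (R := R) (u * d) (d * u) H.comm) u d f = x := by
  have hιC := ev_C (R := R) _ _ H.comm
  have hιX := ev_X (R := R) _ _ H.comm
  have hιY := ev_Y (R := R) _ _ H.comm
  have hσX := sig_X a b bi φ hb
  have hσY := sig_Y a b bi φ hb
  have hσC := sig_C a b bi φ hb
  generalize sig a b bi φ hb = σ at *
  generalize ev (R := R) (u * d) (d * u) H.comm = ι at *
  have hdι : ∀ b, d * ι b = ι (σ b) * d := by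
    intro b
    induction b using biInd with
    | hC r => rw [hσC, hιC, Algebra.commutes]
    | hX => rw [hσX, hιX, hιY, mul_assoc]
    | hY =>
      rw [hσY, hιY, H.relD, map_add, map_add, map_mul, map_mul, hιC, hιC, hιC, hιX, hιY, add_mul,
        add_mul]
    | hadd p q hp hq => rw [map_add, map_add, map_add, mul_add, add_mul, hp, hq]
    | hmul p q hp hq =>
      rw [map_mul, map_mul, map_mul, ← mul_assoc, hp, mul_assoc, hq, mul_assoc]
  have huι' : ∀ b, u * ι (σ b) = ι b * u := by
    intro c
    induction c using biInd with
    | hC r => rw [hσC, hιC, Algebra.commutes]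
    | hX => rw [hσX, hιX, hιY, mul_assoc]
    | hY =>
      rw [hσY, hιY, H.relU, map_add, map_add, map_mul, map_mul, hιC, hιC, hιC, hιX, hιY, mul_add,
        mul_add, ← mul_assoc u (algebraMap _ _ _), ← mul_assoc u (algebraMap _ _ _),
        ← Algebra.commutes a, ← Algebra.commutes b]
    | hadd p q hp hq => rw [map_add, map_add, map_add, mul_add, add_mul, hp, hq]
    | hmul p q hp hq =>
      rw [map_mul, map_mul, map_mul, ← mul_assoc, hp, mul_assoc, hq, mul_assoc]
  have huι : ∀ b, u * ι b = ι (σ.symm b) * u := by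
    intro b
    rw [← huι', AlgEquiv.apply_symm_apply]
  exact Psi_surj (fun b => σ b) (fun b => σ.symm b) ι u d
    (C X) X hdι huι hιX.symm hιY.symm
    (fun S h1 hB hd hu => hgen S h1 (fun r x hx => by
      rw [← hιC r]; exact hB _ x hx) hd hu) x

/-- The action of the integers on the base ring by powers of the automorphism. -/
@[reducible] noncomputable def act (σ : R[X][X] ≃ₐ[R] R[X][X]) : MulSemiringAction G R[X][X] :=
  MulSemiringAction.compHom R[X][X] (zpowersHom (R[X][X] ≃ₐ[R] R[X][X]) σ)

theorem act_one (σ : R[X][X] ≃ₐ[R] R[X][X]) (b : R[X][X]) :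
    (act σ).toSMul.smul (Multiplicative.ofAdd (1 : ℤ)) b = σ b := by
  change (zpowersHom (R[X][X] ≃ₐ[R] R[X][X]) σ (Multiplicative.ofAdd 1)) b = σ b
  simp

theorem act_comm (σ : R[X][X] ≃ₐ[R] R[X][X]) :
    letI := act σ
    SMulCommClass G R R[X][X] :=
  letI := act σ
  ⟨fun g r b => by
    change (zpowersHom (R[X][X] ≃ₐ[R] R[X][X]) σ g) (r • b) =
      r • (zpowersHom (R[X][X] ≃ₐ[R] R[X][X]) σ g) b
    rw [map_smul]⟩

theorem skew_isDU (a b φ : R) [MulSemiringAction G R[X][X]] [SMulCommClass G R R[X][X]]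
    (σ : R[X][X] → R[X][X])
    (hact1 : ∀ b : R[X][X], (Multiplicative.ofAdd (1 : ℤ)) • b = σ b)
    (hσX : σ (C X) = X) (hσY : σ X = C (C a) * X + C (C b) * C X + C (C φ))
    (hσC : ∀ r : R, σ (C (C r)) = C (C r))
    (z y : SkewMonoidAlgebra R[X][X] G)
    (hz : z = single (Multiplicative.ofAdd (1 : ℤ)) 1)
    (hy : y = single (Multiplicative.ofAdd (-1 : ℤ)) (C X)) :
    y * z = single 1 (C X) ∧ z * y = single 1 X ∧ IsDU a b φ y z := by
  have hact2 : ∀ b : R[X][X], (Multiplicative.ofAdd (-1 : ℤ)) • σ b = b := by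
    intro b
    rw [← hact1, smul_smul, ← ofAdd_add]
    exact one_smul _ b
  have hyz : y * z = single 1 (C X) := by
    rw [hy, hz, single_mul_single, ← ofAdd_add, smul_one, mul_one]; rfl
  have hzy : z * y = single 1 X := by
    rw [hy, hz, single_mul_single, ← ofAdd_add, hact1, hσX, one_mul]; rfl
  have hzb : ∀ b, z * single 1 b = single 1 (σ b) * z := by
    intro b
    rw [hz, single_mul_single, single_mul_single, hact1]; simp
  have hyb : ∀ b, y * single 1 (σ b) = single 1 b * y := by
    intro b
    rw [hy, single_mul_single, single_mul_single, hact2, one_smul, mul_comm b]; simp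
  have halg : ∀ r : R, algebraMap R (SkewMonoidAlgebra R[X][X] G) r = single 1 (C (C r)) :=
    fun r => rfl
  have hs1 : ∀ p q : R[X][X], (single 1 p : SkewMonoidAlgebra R[X][X] G) * single 1 q =
      single 1 (p * q) := by
    intro p q
    rw [single_mul_single, one_smul, one_mul]
  have hcy : ∀ (r : R) (w : SkewMonoidAlgebra R[X][X] G),
      single 1 (C (C r)) * (y * w) = y * (single 1 (C (C r)) * w) := by
    intro r w
    rw [← mul_assoc, ← hyb, hσC, mul_assoc]
  refine ⟨hyz, hzy, ⟨?_, ?_⟩⟩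
  · rw [hzy, hzb, hσY, hyz, halg, halg, halg, hs1, hs1,
      ← add_mul, ← add_mul, ← single_add, ← single_add]
  · rw [hzy, ← hyb, hσY, hyz, halg, halg, halg, mul_assoc, mul_assoc, hcy, hcy, hs1, hs1,
      ← mul_add, ← mul_add, ← single_add, ← single_add]

theorem generic_units [IsDomain R] (a b bi φ : R) {u d : A} (H : IsDU a b φ u d) (hb : b * bi = 1)
    (hgen : ∀ S : AddSubgroup A, 1 ∈ S → (∀ r, ∀ x ∈ S, algebraMap R A r * x ∈ S) →
      (∀ x ∈ S, d * x ∈ S) → (∀ x ∈ S, u * x ∈ S) → S = ⊤)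
    (huniv : ∀ (E : Type) [Ring E] [Algebra R E] (y z : E), IsDU a b φ y z →
      ∃ Φ : A →ₐ[R] E, Φ u = y ∧ Φ d = z)
    (x : A) (hx : IsUnit x) : ∃ r : R, IsUnit r ∧ x = algebraMap R A r := by
  have hsurj := du_surj a b bi φ hb H hgen
  have hιC := ev_C (R := R) _ _ H.comm
  have hιX := ev_X (R := R) _ _ H.comm
  have hιY := ev_Y (R := R) _ _ H.comm
  have hσX := sig_X a b bi φ hb
  have hσY := sig_Y a b bi φ hb
  have hσC := sig_C a b bi φ hb
  generalize sig a b bi φ hb = σ at *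
  generalize ev (R := R) (u * d) (d * u) H.comm = ι at *
  have hact := act_one σ
  have hco := act_comm σ
  letI := act σ
  obtain ⟨hyz, hzy, HS⟩ := skew_isDU a b φ (fun p => σ p) hact hσX hσY hσC _ _ rfl rfl
  obtain ⟨Φ, hu, hd⟩ := huniv _ _ _ HS
  have hι : ∀ p, Φ (ι p) = single 1 p := by
    intro p
    induction p using biInd with
    | hC r => rw [hιC, AlgHom.commutes]; rfl
    | hX => rw [hιX, map_mul, hu, hd, hyz]
    | hY => rw [hιY, map_mul, hu, hd, hzy]
    | hadd p q hp hq => rw [map_add, map_add, hp, hq, single_add]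
    | hmul p q hp hq => rw [map_mul, map_mul, hp, hq, single_mul_single, one_smul, one_mul]
  have hX0 : (C X : R[X][X]) ≠ 0 := by simp
  have hXu : ¬ IsUnit (C X : R[X][X]) := by rw [isUnit_C]; exact not_isUnit_X
  obtain ⟨p, hp, rfl⟩ := abstract_units ι u d (C X) hX0 hXu hsurj Φ.toRingHom hι hd hu x hx
  obtain ⟨p1, hp1, rfl⟩ := Polynomial.isUnit_iff.1 hp
  obtain ⟨p2, hp2, rfl⟩ := Polynomial.isUnit_iff.1 hp1
  exact ⟨p2, hp2, hιC p2⟩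

end generic

section main
open DownUp
variable {K : Type} [Field K] {n : ℕ} (α β : K) (φ : MvPolynomial (Fin n) K)

noncomputable def qm : F K n →ₐ[MvPolynomial (Fin n) K] A α β φ :=
  RingQuot.mkAlgHom (MvPolynomial (Fin n) K) (Rel α β φ)

noncomputable def uu : A α β φ := qm α β φ uF
noncomputable def dd : A α β φ := qm α β φ dF

theorem smulF (c : K) (x : F K n) : c • x =
    algebraMap (MvPolynomial (Fin n) K) (F K n) (MvPolynomial.C c) * x := by
  rw [← Algebra.smul_def, ← MvPolynomial.algebraMap_eq, algebraMap_smul]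

theorem relD : dd α β φ * (dd α β φ * uu α β φ) =
    algebraMap (MvPolynomial (Fin n) K) _ (MvPolynomial.C α) * (dd α β φ * uu α β φ) * dd α β φ +
    algebraMap (MvPolynomial (Fin n) K) _ (MvPolynomial.C β) * (uu α β φ * dd α β φ) * dd α β φ +
    algebraMap (MvPolynomial (Fin n) K) _ φ * dd α β φ := by
  have := RingQuot.mkAlgHom_rel (MvPolynomial (Fin n) K) (Rel.ddu (α := α) (β := β) (φ := φ))
  rw [smulF, smulF] at this
  change qm α β φ _ = qm α β φ _ at this
  simp only [map_mul, map_add, AlgHom.commutes] at this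
  simpa only [mul_assoc, uu, dd] using this

theorem relU : dd α β φ * uu α β φ * uu α β φ =
    algebraMap (MvPolynomial (Fin n) K) _ (MvPolynomial.C α) * uu α β φ * (dd α β φ * uu α β φ) +
    algebraMap (MvPolynomial (Fin n) K) _ (MvPolynomial.C β) * uu α β φ * (uu α β φ * dd α β φ) +
    uu α β φ * algebraMap (MvPolynomial (Fin n) K) _ φ := by
  have := RingQuot.mkAlgHom_rel (MvPolynomial (Fin n) K) (Rel.duu (α := α) (β := β) (φ := φ))
  rw [smulF, smulF] at this
  change qm α β φ _ = qm α β φ _ at this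
  simp only [map_mul, map_add, AlgHom.commutes] at this
  simpa only [mul_assoc, uu, dd] using this

theorem gen (S : AddSubgroup (A α β φ)) (h1 : 1 ∈ S)
    (hR : ∀ r, ∀ x ∈ S, algebraMap (MvPolynomial (Fin n) K) _ r * x ∈ S)
    (hd : ∀ x ∈ S, dd α β φ * x ∈ S) (hu : ∀ x ∈ S, uu α β φ * x ∈ S) : S = ⊤ := by
  rw [AddSubgroup.eq_top_iff']
  intro a
  obtain ⟨f, rfl⟩ := RingQuot.mkAlgHom_surjective (MvPolynomial (Fin n) K) (Rel α β φ) a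
  change qm α β φ f ∈ S
  suffices h : ∀ x ∈ S, qm α β φ f * x ∈ S by simpa using h 1 h1
  induction f using FreeAlgebra.induction with
  | grade0 r => rw [AlgHom.commutes]; exact hR r
  | grade1 g =>
    cases g
    · exact hu
    · exact hd
  | mul a b ha hb => intro x hx; rw [map_mul, mul_assoc]; exact ha _ (hb _ hx)
  | add a b ha hb => intro x hx; rw [map_add, add_mul]; exact add_mem (ha _ hx) (hb _ hx)

theorem main_units (hβ : β ≠ 0) (a : A α β φ) (ha : IsUnit a) :
    ∃ c : K, c ≠ 0 ∧ a = algebraMap K (A α β φ) c := by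
  have hb : (MvPolynomial.C β : MvPolynomial (Fin n) K) * MvPolynomial.C β⁻¹ = 1 := by
    rw [← map_mul, mul_inv_cancel₀ hβ, map_one]
  obtain ⟨r, hr, rfl⟩ := generic_units (MvPolynomial.C α) (MvPolynomial.C β) (MvPolynomial.C β⁻¹) φ
    ⟨relD α β φ, relU α β φ⟩ hb (gen α β φ) (by
      intro E _ _ y z H
      let Φ0 : F K n →ₐ[MvPolynomial (Fin n) K] E :=
        FreeAlgebra.lift (MvPolynomial (Fin n) K) (fun g => Gen.casesOn g y z)
      have hΦu : Φ0 uF = y := FreeAlgebra.lift_ι_apply _ _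
      have hΦd : Φ0 dF = z := FreeAlgebra.lift_ι_apply _ _
      have hrel : ∀ ⦃p q : F K n⦄, Rel α β φ p q → Φ0 p = Φ0 q := by
        intro p q hpq
        cases hpq with
        | ddu =>
          rw [smulF, smulF]
          simp only [map_mul, map_add, AlgHom.commutes, hΦu, hΦd]
          simpa only [mul_assoc] using H.relD
        | duu =>
          rw [smulF, smulF]
          simp only [map_mul, map_add, AlgHom.commutes, hΦu, hΦd]
          simpa only [mul_assoc] using H.relU
      refine ⟨RingQuot.liftAlgHom _ ⟨Φ0, hrel⟩, ?_, ?_⟩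
      · exact (RingQuot.liftAlgHom_mkAlgHom_apply _ Φ0 hrel _).trans hΦu
      · exact (RingQuot.liftAlgHom_mkAlgHom_apply _ Φ0 hrel _).trans hΦd) a ha
  obtain ⟨c, hc, rfl⟩ := MvPolynomial.isUnit_iff_eq_C_of_isReduced.1 hr
  refine ⟨c, hc.ne_zero, ?_⟩
  rw [IsScalarTower.algebraMap_apply K (MvPolynomial (Fin n) K) (A α β φ),
    MvPolynomial.algebraMap_eq]

end main

end Polynomial.DownUpAux

open DownUp in
/-- If β ≠ 0, every invertible element of A(α,β,φ) is a nonzero scalar. -/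
theorem downUp_units {K : Type} [Field K] {n : ℕ}
    (α β : K) (hβ : β ≠ 0) (φ : MvPolynomial (Fin n) K) :
    ∀ a : A α β φ, IsUnit a → ∃ c : K, c ≠ 0 ∧ a = algebraMap K (A α β φ) c :=
  fun a ha => Polynomial.DownUpAux.main_units α β φ hβ a ha
end
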